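/- arXiv:2601.03572 — 3 statements merged into one kernel-verified Lean document; each statement's English description precedes it below -/
import Mathlib

section
/- Let Ω be a (3,10,40)-graph. Then the diameter of Ω is either 2 or 3; that is, 2 ≤ diam(Ω) ≤ 3. -/
/-!
Lower bounds on the number of edges of a triangle-free graph, in terms of its order and of a bound
on its independence number, go up one independence number at a time: the nonneighbours of a vertex
of degree `d` carry an independent set smaller by one and miss as many edges as the sum of the
degrees of the `d` neighbours, and summing over all vertices compares the bound for the smaller
independence number with the sum of the squared degrees. This averaging falls short at a single
place, 16 vertices with independence number at most 5, where it leaves open a graph with 31 edges;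
the structure of the vertices of degree 3 and 5 excludes that graph.

If two vertices of a (3,10,40)-graph had distance greater than 3, their neighbourhoods `A` and `B`
would be disjoint with independent union, so `#A + #B ≤ 9`. The set `H` of common nonneighbours has
independence number at most 7, hence at most 29 vertices, so both bounds are attained. Counting the
vertices of `H` with exactly one neighbour in `A` or in `B` forces `{#A, #B} = {4, 5}` and equality
in every estimate used. The vertices with exactly one neighbour in the smaller side then span more
edges than the degrees in `H` allow.
-/

namespace TriangleRamsey

open Finset

section Degrees

variable {V : Type*} {G : SimpleGraph V} [DecidableRel G.Adj] {S T : Finset V} {v w : V}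

/-- The neighbourhood of `v` inside `S`. -/
def nbrIn (G : SimpleGraph V) [DecidableRel G.Adj] (S : Finset V) (v : V) : Finset V :=
  {w ∈ S | G.Adj v w}

/-- The number of neighbours of `v` inside `S`; the vertex `v` need not lie in `S`. -/
def degIn (G : SimpleGraph V) [DecidableRel G.Adj] (S : Finset V) (v : V) : ℕ :=
  #(nbrIn G S v)

/-- The degree sum of the subgraph induced on `S`, that is, twice its number of edges. -/
def degSum (G : SimpleGraph V) [DecidableRel G.Adj] (S : Finset V) : ℕ :=
  ∑ v ∈ S, degIn G S v

/-- The sum of the degrees inside `S` of the neighbours of `v` inside `S`; for `v ∈ S` in a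
triangle-free graph it counts the edges of `S` that meet the neighbourhood of `v`. -/
def nbrDegSum (G : SimpleGraph V) [DecidableRel G.Adj] (S : Finset V) (v : V) : ℕ :=
  ∑ w ∈ nbrIn G S v, degIn G S w

@[simp]
theorem mem_nbrIn : w ∈ nbrIn G S v ↔ w ∈ S ∧ G.Adj v w := by
  simp [nbrIn]

theorem notMem_nbrIn_self : v ∉ nbrIn G S v := by
  simp

theorem nbrIn_subset : nbrIn G S v ⊆ S :=
  filter_subset _ _

theorem degIn_mono (h : S ⊆ T) (v : V) : degIn G S v ≤ degIn G T v :=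
  card_le_card (filter_subset_filter _ h)

theorem degIn_eq_zero_iff : degIn G S v = 0 ↔ ∀ w ∈ S, ¬G.Adj v w := by
  rw [degIn, card_eq_zero, nbrIn, filter_eq_empty_iff]

theorem degIn_pos_iff : 0 < degIn G S v ↔ ∃ w ∈ S, G.Adj v w := by
  simp only [degIn, card_pos, Finset.Nonempty, mem_nbrIn]

theorem degIn_pos (hw : w ∈ S) (hvw : G.Adj v w) : 0 < degIn G S v :=
  degIn_pos_iff.2 ⟨w, hw, hvw⟩

theorem eq_of_degIn_le_one {x : V} (h : degIn G S v ≤ 1) (hw : w ∈ S) (hx : x ∈ S)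
    (hvw : G.Adj v w) (hvx : G.Adj v x) : w = x :=
  card_le_one.1 h w (mem_nbrIn.2 ⟨hw, hvw⟩) x (mem_nbrIn.2 ⟨hx, hvx⟩)

theorem sum_sum_nbrIn (S T : Finset V) (f : V → ℕ) :
    ∑ v ∈ S, ∑ w ∈ nbrIn G T v, f w = ∑ w ∈ T, degIn G S w * f w := by
  simp only [nbrIn, sum_filter]
  rw [sum_comm]
  refine sum_congr rfl fun w _ => ?_
  rw [← sum_filter, sum_const, smul_eq_mul]
  simp only [degIn, nbrIn, G.adj_comm]

theorem sum_degIn_comm (S T : Finset V) : ∑ v ∈ S, degIn G T v = ∑ w ∈ T, degIn G S w := by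
  simpa [degIn] using sum_sum_nbrIn (G := G) S T fun _ => 1

theorem sum_nbrDegSum (S : Finset V) : ∑ v ∈ S, nbrDegSum G S v = ∑ v ∈ S, degIn G S v ^ 2 := by
  simp only [nbrDegSum, sum_sum_nbrIn, sq]

end Degrees

section Partition

variable {V : Type*} [DecidableEq V] {G : SimpleGraph V} [DecidableRel G.Adj]
  {S T : Finset V} {v w : V}

/-- The vertices of `S` other than `v` that are not adjacent to `v`. -/
def nonNbrIn (G : SimpleGraph V) [DecidableRel G.Adj] (S : Finset V) (v : V) : Finset V :=
  {w ∈ S | w ≠ v ∧ ¬G.Adj v w}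

@[simp]
theorem mem_nonNbrIn : w ∈ nonNbrIn G S v ↔ w ∈ S ∧ w ≠ v ∧ ¬G.Adj v w := by
  simp [nonNbrIn]

theorem degIn_union (h : Disjoint S T) (v : V) :
    degIn G (S ∪ T) v = degIn G S v + degIn G T v := by
  rw [degIn, nbrIn, filter_union, card_union_of_disjoint (disjoint_filter_filter h)]
  rfl

theorem degIn_sdiff_add (h : T ⊆ S) (v : V) :
    degIn G (S \ T) v + degIn G T v = degIn G S v := by
  rw [← degIn_union sdiff_disjoint, sdiff_union_of_subset h]

theorem degSum_union (h : Disjoint S T) :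
    degSum G (S ∪ T) = degSum G S + degSum G T + 2 * ∑ v ∈ S, degIn G T v := by
  simp only [degSum, sum_union h, degIn_union h, sum_add_distrib, sum_degIn_comm T S]
  ring

theorem degSum_add_degSum (h : T ⊆ S) :
    degSum G S + degSum G T = degSum G (S \ T) + 2 * ∑ v ∈ T, degIn G S v := by
  have hT : ∑ v ∈ T, degIn G S v = ∑ v ∈ T, degIn G (S \ T) v + degSum G T := by
    simp only [degSum, ← degIn_sdiff_add h, sum_add_distrib]
  have hS := degSum_union (G := G) (sdiff_disjoint (s := T) (t := S))
  rw [sdiff_union_of_subset h, sum_degIn_comm] at hS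
  lia

theorem sdiff_insert_nbrIn : S \ insert v (nbrIn G S v) = nonNbrIn G S v := by
  ext w
  simp only [mem_sdiff, mem_insert, mem_nbrIn, mem_nonNbrIn]
  tauto

theorem insert_nbrIn_subset (hv : v ∈ S) : insert v (nbrIn G S v) ⊆ S :=
  insert_subset hv nbrIn_subset

theorem card_nonNbrIn (hv : v ∈ S) : #(nonNbrIn G S v) + degIn G S v + 1 = #S := by
  rw [← sdiff_insert_nbrIn, ← card_sdiff_add_card_eq_card (insert_nbrIn_subset (G := G) hv),
    card_insert_of_notMem notMem_nbrIn_self, degIn, add_assoc]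

theorem degIn_nonNbrIn (hv : v ∈ S) (hw : w ∈ nonNbrIn G S v) :
    degIn G (nonNbrIn G S v) w + degIn G (nbrIn G S v) w = degIn G S w := by
  rw [← degIn_sdiff_add (insert_nbrIn_subset (G := G) hv), sdiff_insert_nbrIn, insert_eq,
    degIn_union (disjoint_singleton_left.2 notMem_nbrIn_self)]
  have : degIn G {v} w = 0 := by
    simpa [degIn_eq_zero_iff, G.adj_comm] using (mem_nonNbrIn.1 hw).2.2
  rw [this, zero_add]

end Partition

section TriangleFree

variable {V : Type*} {G : SimpleGraph V} {S T : Finset V} {u v w : V}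

theorem not_adj_of_cliqueFree_three (hG : G.CliqueFree 3) (huv : G.Adj u v) (huw : G.Adj u w) :
    ¬G.Adj v w := by
  classical
  exact fun hvw => hG {u, v, w} (SimpleGraph.is3Clique_triple_iff.2 ⟨huv, huw, hvw⟩)

variable [DecidableRel G.Adj]

theorem isIndepSet_nbrIn (hG : G.CliqueFree 3) (S : Finset V) (v : V) :
    G.IsIndepSet (nbrIn G S v : Set V) := by
  intro x hx y hy _
  exact not_adj_of_cliqueFree_three hG (mem_nbrIn.1 hx).2 (mem_nbrIn.1 hy).2

theorem degSum_eq_zero_of_isIndepSet (h : G.IsIndepSet (S : Set V)) : degSum G S = 0 :=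
  sum_eq_zero fun _ hv => degIn_eq_zero_iff.2 fun _ hw hvw => h hv hw hvw.ne hvw

theorem degSum_insert_nbrIn [DecidableEq V] (hG : G.CliqueFree 3) :
    degSum G (insert v (nbrIn G S v)) = 2 * degIn G S v := by
  have hv : degSum G {v} = 0 := degSum_eq_zero_of_isIndepSet (by simp [SimpleGraph.IsIndepSet])
  have hN : degIn G (nbrIn G S v) v = degIn G S v := by simp [degIn, nbrIn, filter_filter]
  rw [insert_eq, degSum_union (disjoint_singleton_left.2 notMem_nbrIn_self), hv,
    degSum_eq_zero_of_isIndepSet (isIndepSet_nbrIn hG S v), sum_singleton, hN]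
  lia

theorem degSum_eq_degSum_nonNbrIn_add [DecidableEq V] (hG : G.CliqueFree 3) (hv : v ∈ S) :
    degSum G S = degSum G (nonNbrIn G S v) + 2 * nbrDegSum G S v := by
  have h := degSum_add_degSum (insert_nbrIn_subset (G := G) (v := v) hv) (G := G)
  rw [degSum_insert_nbrIn hG, sdiff_insert_nbrIn, sum_insert notMem_nbrIn_self] at h
  rw [nbrDegSum]
  lia

theorem even_degSum (S : Finset V) : Even (degSum G S) := by
  classical
  induction S using Finset.induction_on with
  | empty => simp [degSum]
  | insert v S hv ih =>
    rw [insert_eq, degSum_union (disjoint_singleton_left.2 hv),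
      degSum_eq_zero_of_isIndepSet (by simp [SimpleGraph.IsIndepSet]), zero_add]
    exact ih.add (even_two_mul _)

end TriangleFree

section IndependenceNumber

variable {V : Type*} {G : SimpleGraph V} {S T : Finset V} {v : V} {k : ℕ}

/-- The independence number of the subgraph induced on `S` is at most `k`. -/
def IndepNumLE (G : SimpleGraph V) (S : Finset V) (k : ℕ) : Prop :=
  ∀ I ⊆ S, G.IsIndepSet (I : Set V) → #I ≤ k

theorem IndepNumLE.mono (hS : IndepNumLE G S k) (hTS : T ⊆ S) : IndepNumLE G T k :=
  fun I hI => hS I (hI.trans hTS)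

theorem isIndepSet_union [DecidableEq V] {I J : Finset V} (hI : G.IsIndepSet (I : Set V))
    (hJ : G.IsIndepSet (J : Set V)) (h : ∀ a ∈ I, ∀ b ∈ J, ¬G.Adj a b) :
    G.IsIndepSet ((I ∪ J : Finset V) : Set V) := by
  rw [coe_union, SimpleGraph.IsIndepSet, Set.pairwise_union]
  exact ⟨hI, hJ, fun a ha b hb _ => ⟨h a ha b hb, fun hba => h a ha b hb hba.symm⟩⟩

theorem isIndepSet_insert [DecidableEq V] {I : Finset V} (hI : G.IsIndepSet (I : Set V))
    (h : ∀ w ∈ I, ¬G.Adj v w) : G.IsIndepSet ((insert v I : Finset V) : Set V) := by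
  rw [insert_eq]
  exact isIndepSet_union (by simp [SimpleGraph.IsIndepSet]) hI (by simpa using h)

theorem IndepNumLE.of_union [DecidableEq V] {J : Finset V} (h : IndepNumLE G (J ∪ T) (k + #J))
    (hJ : G.IsIndepSet (J : Set V)) (hdisj : Disjoint J T)
    (hJT : ∀ a ∈ J, ∀ b ∈ T, ¬G.Adj a b) : IndepNumLE G T k := by
  intro I hIT hI
  have hcard := h (J ∪ I) (union_subset_union_right hIT)
    (isIndepSet_union hJ hI fun a ha b hb => hJT a ha b (hIT hb))
  rw [card_union_of_disjoint (hdisj.mono_right hIT)] at hcard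
  lia

theorem IndepNumLE.nonNbrIn [DecidableEq V] [DecidableRel G.Adj] (h : IndepNumLE G S (k + 1))
    (hv : v ∈ S) : IndepNumLE G (nonNbrIn G S v) k := by
  refine IndepNumLE.of_union (J := {v}) (h.mono ?_) (by simp [SimpleGraph.IsIndepSet])
    (by simp) (by simp)
  exact union_subset (singleton_subset_iff.2 hv) (filter_subset _ _)

theorem IndepNumLE.degIn_le [DecidableRel G.Adj] (hS : IndepNumLE G S k) (hG : G.CliqueFree 3)
    (v : V) : degIn G S v ≤ k :=
  hS _ nbrIn_subset (isIndepSet_nbrIn hG S v)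

end IndependenceNumber

section EdgeTable

/-- An upper bound, for `k ≤ 7`, for the number of vertices of a triangle-free graph with
independence number at most `k`. It is the exact value `R(3, k + 1) - 1` for `k ≤ 4`, one more
for `k = 5` and `k = 6`, and two more for `k = 7`. -/
def orderTable : ℕ → ℕ
  | 1 => 2
  | 2 => 5
  | 3 => 8
  | 4 => 13
  | 5 => 18
  | 6 => 23
  | 7 => 29
  | _ => 0

/-- A lower bound, for `k ≤ 7`, for the number of edges of a triangle-free graph on `n` vertices
with independence number at most `k`; only the nontrivial bounds that are needed are tabulated. -/
def edgeTable : ℕ → ℕ → ℕ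
  | 1, 2 => 1
  | 2, 3 => 1
  | 2, 4 => 2
  | 2, 5 => 5
  | 3, 6 => 3
  | 3, 7 => 6
  | 3, 8 => 10
  | 4, 9 => 7
  | 4, 10 => 10
  | 4, 11 => 15
  | 4, 12 => 20
  | 4, 13 => 26
  | 5, 13 => 14
  | 5, 14 => 19
  | 5, 15 => 25
  | 5, 16 => 32
  | 5, 17 => 38
  | 5, 18 => 45
  | 6, 20 => 42
  | 6, 21 => 50
  | 6, 22 => 59
  | 6, 23 => 68
  | 7, 28 => 88
  | 7, 29 => 99
  | _, _ => 0

variable {V : Type*} {G : SimpleGraph V} [DecidableRel G.Adj] {S : Finset V} {v : V} {k m : ℕ}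

/-- Row `k` of the tables is correct for the subgraphs of `G`. -/
def TableRow (G : SimpleGraph V) [DecidableRel G.Adj] (k : ℕ) : Prop :=
  ∀ S, IndepNumLE G S k → #S ≤ orderTable k ∧ 2 * edgeTable k #S ≤ degSum G S

theorem sum_edgeTable_le (hG : G.CliqueFree 3) (hrow : TableRow G k) (hS : IndepNumLE G S (k + 1))
    (β : ℤ) :
    2 * ∑ v ∈ S, ((edgeTable k (#S - 1 - degIn G S v) : ℤ) + degIn G S v ^ 2 - β * degIn G S v) ≤
      (#S - 2 * β) * degSum G S := by
  classical
  have hvertex : ∀ v ∈ S, 2 * (edgeTable k (#S - 1 - degIn G S v) : ℤ) + 2 * nbrDegSum G S v ≤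
      degSum G S := by
    intro v hv
    have hcard := card_nonNbrIn (G := G) hv
    have hedge := (hrow _ (hS.nonNbrIn hv)).2
    rw [show #(nonNbrIn G S v) = #S - 1 - degIn G S v by lia] at hedge
    have hsplit := degSum_eq_degSum_nonNbrIn_add hG hv
    lia
  have hsum := sum_le_sum hvertex
  have hsq : (∑ v ∈ S, (nbrDegSum G S v : ℤ)) = ∑ v ∈ S, (degIn G S v : ℤ) ^ 2 :=
    mod_cast sum_nbrDegSum S
  have hdeg : (∑ v ∈ S, (degIn G S v : ℤ)) = degSum G S := by simp [degSum]
  simp only [sum_add_distrib, sum_sub_distrib, ← mul_sum, hsq, hdeg, sum_const, nsmul_eq_mul]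
    at hsum ⊢
  linarith

/-- The averaging argument with slope `β` shows that a triangle-free graph on `n` vertices with
independence number at most `k + 1` has at least `m` edges: each vertex of degree `d` whose
nonneighbours obey row `k` contributes more than it could if there were only `m - 1` edges. -/
abbrev EdgeStep (k n m β : ℕ) : Prop :=
  2 * β < n ∧ ∀ d ≤ k + 1, d + 1 ≤ n → n - 1 - d ≤ orderTable k →
    ((n : ℤ) - 2 * β) * (m - 1) < n * (edgeTable k (n - 1 - d) + d ^ 2 - β * d)

theorem two_mul_le_degSum_of_edgeStep (hG : G.CliqueFree 3) (hrow : TableRow G k)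
    (hS : IndepNumLE G S (k + 1)) {β : ℕ} (hstep : EdgeStep k #S m β) : 2 * m ≤ degSum G S := by
  classical
  obtain ⟨hβ, hstep⟩ := hstep
  have hvertex : ∀ v ∈ S, ((#S : ℤ) - 2 * β) * (m - 1) <
      #S * (edgeTable k (#S - 1 - degIn G S v) + degIn G S v ^ 2 - β * degIn G S v) := by
    intro v hv
    have hcard := card_nonNbrIn (G := G) hv
    have hN := (hrow _ (hS.nonNbrIn hv)).1
    exact hstep _ (hS.degIn_le hG v) (by lia) (by lia)
  have hsum := sum_lt_sum_of_nonempty (card_pos.1 (by lia)) hvertex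
  rw [sum_const, nsmul_eq_mul, ← mul_sum, mul_lt_mul_iff_right₀ (by lia)] at hsum
  obtain ⟨e, he⟩ := even_iff_two_dvd.1 (even_degSum (G := G) S)
  have htotal := sum_edgeTable_le hG hrow hS β
  rw [he, Nat.cast_mul] at htotal
  have : (m : ℤ) - 1 < e := lt_of_mul_lt_mul_left (a := (#S : ℤ) - 2 * β) (by lia) (by lia)
  lia

theorem card_le_of_edgeStep (hG : G.CliqueFree 3) (hrow : TableRow G k)
    (hS : IndepNumLE G S (k + 1)) {N β : ℕ}
    (hstep : EdgeStep k (N + 1) ((k + 1) * (N + 1) / 2 + 1) β) : #S ≤ N := by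
  by_contra! hlt
  obtain ⟨T, hTS, hT⟩ := exists_subset_card_eq (Nat.succ_le_of_lt hlt)
  have hindep := hS.mono hTS
  have hlow := two_mul_le_degSum_of_edgeStep hG hrow hindep (by rwa [hT])
  have hup : degSum G T ≤ #T • (k + 1) :=
    sum_le_card_nsmul _ _ _ fun v _ => hindep.degIn_le hG v
  rw [hT, smul_eq_mul, mul_comm] at hup
  lia

theorem TableRow.succ (hG : G.CliqueFree 3) (hrow : TableRow G k)
    (horder : ∃ β ≤ 5, EdgeStep k (orderTable (k + 1) + 1)
      ((k + 1) * (orderTable (k + 1) + 1) / 2 + 1) β)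
    (hedge : ∀ n ≤ orderTable (k + 1),
      edgeTable (k + 1) n = 0 ∨ ∃ β ≤ 5, EdgeStep k n (edgeTable (k + 1) n) β) :
    TableRow G (k + 1) := by
  intro S hS
  obtain ⟨_, _, horder⟩ := horder
  have hcard := card_le_of_edgeStep hG hrow hS horder
  refine ⟨hcard, ?_⟩
  rcases hedge _ hcard with hzero | ⟨_, _, hstep⟩
  · simp [hzero]
  · exact two_mul_le_degSum_of_edgeStep hG hrow hS hstep

theorem tableRow_zero : TableRow G 0 := by
  intro S hS
  have : S = ∅ := by
    by_contra! hne
    obtain ⟨v, hv⟩ := hne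
    have := hS {v} (singleton_subset_iff.2 hv) (by simp [SimpleGraph.IsIndepSet])
    simp at this
  simp [this, edgeTable]

theorem tableRow_one (hG : G.CliqueFree 3) : TableRow G 1 :=
  tableRow_zero.succ hG (by decide) (by decide)

theorem tableRow_two (hG : G.CliqueFree 3) : TableRow G 2 :=
  (tableRow_one hG).succ hG (by decide) (by decide)

theorem tableRow_three (hG : G.CliqueFree 3) : TableRow G 3 :=
  (tableRow_two hG).succ hG (by decide) (by decide)

theorem tableRow_four (hG : G.CliqueFree 3) : TableRow G 4 :=
  (tableRow_three hG).succ hG (by decide) (by decide)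

end EdgeTable

section Sixteen

variable {V : Type*} {G : SimpleGraph V} [DecidableRel G.Adj] {S : Finset V} {d : ℕ} {v w r : V}

/-- The vertices of degree `d` in the subgraph induced on `S`. -/
def degClass (G : SimpleGraph V) [DecidableRel G.Adj] (S : Finset V) (d : ℕ) : Finset V :=
  {v ∈ S | degIn G S v = d}

@[simp]
theorem mem_degClass : v ∈ degClass G S d ↔ v ∈ S ∧ degIn G S v = d := by
  simp [degClass]

theorem degIn_filter (S : Finset V) (p : V → Prop) [DecidablePred p] (v : V) :
    degIn G {w ∈ S | p w} v = #{w ∈ nbrIn G S v | p w} := by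
  rw [degIn, nbrIn, nbrIn, filter_comm]

/-- `G` is triangle-free and its subgraph induced on `S` has 16 vertices, 31 edges and independence
number at most 5. No such `S` exists, which is why `edgeTable 5 16` is 32. -/
structure IsSixteenThirtyOne (G : SimpleGraph V) [DecidableRel G.Adj] (S : Finset V) : Prop where
  cliqueFree : G.CliqueFree 3
  indepNumLE : IndepNumLE G S 5
  card_eq : #S = 16
  degSum_eq : degSum G S = 62

namespace IsSixteenThirtyOne

theorem two_le_degIn (hS : IsSixteenThirtyOne G S) (hv : v ∈ S) : 2 ≤ degIn G S v := by
  classical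
  have hcard := card_nonNbrIn (G := G) hv
  have hN := (tableRow_four hS.cliqueFree _ (hS.indepNumLE.nonNbrIn hv)).1
  simp only [hS.card_eq, orderTable] at hcard hN
  lia

theorem nbrDegSum_add_le (hS : IsSixteenThirtyOne G S) (hv : v ∈ S) :
    nbrDegSum G S v + 4 + (if degIn G S v = 2 then 1 else 0) ≤ 5 * degIn G S v := by
  classical
  have hcard := card_nonNbrIn (G := G) hv
  have hedge := (tableRow_four hS.cliqueFree _ (hS.indepNumLE.nonNbrIn hv)).2
  have hsplit := degSum_eq_degSum_nonNbrIn_add hS.cliqueFree hv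
  have hd5 := hS.indepNumLE.degIn_le hS.cliqueFree v
  have hd2 := hS.two_le_degIn hv
  rw [show #(nonNbrIn G S v) = 15 - degIn G S v by rw [hS.card_eq] at hcard; lia] at hedge
  rw [hS.degSum_eq] at hsplit
  interval_cases degIn G S v <;> simp [edgeTable] at hedge ⊢ <;> lia

theorem card_degClass_add (hS : IsSixteenThirtyOne G S) :
    2 * #(degClass G S 2) + #(degClass G S 3) = #(degClass G S 5) + 2 := by
  have hpoint : ∀ v ∈ S, degIn G S v + 2 * (if degIn G S v = 2 then 1 else 0) +
      (if degIn G S v = 3 then 1 else 0) = 4 + if degIn G S v = 5 then 1 else 0 := by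
    intro v hv
    have hd5 := hS.indepNumLE.degIn_le hS.cliqueFree v
    have hd2 := hS.two_le_degIn hv
    split_ifs <;> lia
  have hsum := sum_congr rfl hpoint
  simp only [sum_add_distrib, ← mul_sum, ← card_filter, sum_const, hS.card_eq, smul_eq_mul] at hsum
  have hdeg : ∑ v ∈ S, degIn G S v = 62 := hS.degSum_eq
  simp only [degClass]
  lia

/-- The identity `5 * d - 4 = d ^ 2`, which is true for `d = 4` and corrected for `d = 2, 3, 5`,
summed over the degrees `d` of the vertices. -/
theorem card_degClass_add_sum (hS : IsSixteenThirtyOne G S) :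
    4 * #(degClass G S 5) + ∑ v ∈ S, (5 * degIn G S v) = ∑ v ∈ S, (nbrDegSum G S v + 4) +
      2 * #(degClass G S 2) + 2 * #(degClass G S 3) := by
  have hpoint : ∀ v ∈ S, 4 * (if degIn G S v = 5 then 1 else 0) + 5 * degIn G S v =
      degIn G S v ^ 2 + 4 + 2 * (if degIn G S v = 2 then 1 else 0) +
        2 * (if degIn G S v = 3 then 1 else 0) := by
    intro v hv
    have hd5 := hS.indepNumLE.degIn_le hS.cliqueFree v
    have hd2 := hS.two_le_degIn hv
    interval_cases degIn G S v <;> rfl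
  have hsum := sum_congr rfl hpoint
  simp only [sum_add_distrib, ← mul_sum, ← card_filter, ← sum_nbrDegSum] at hsum
  simpa only [sum_add_distrib, ← mul_sum, degClass] using hsum

theorem four_mul_card_degClass_le (hS : IsSixteenThirtyOne G S) :
    4 * #(degClass G S 5) ≤ #(degClass G S 2) + 2 * #(degClass G S 3) := by
  have hsum := sum_le_sum fun v hv => hS.nbrDegSum_add_le (v := v) hv
  rw [sum_add_distrib, ← card_filter] at hsum
  have hcount := hS.card_degClass_add_sum
  simp only [degClass] at hcount ⊢
  lia

theorem three_le_degIn (hS : IsSixteenThirtyOne G S) (hv : v ∈ S) : 3 ≤ degIn G S v := by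
  by_contra! hlt
  have hv2 : degIn G S v = 2 := le_antisymm (Nat.le_of_lt_succ hlt) (hS.two_le_degIn hv)
  obtain ⟨w, hw, hw3⟩ : ∃ w ∈ nbrIn G S v, degIn G S w < 3 := by
    refine exists_lt_of_sum_lt ?_
    have hbound := hS.nbrDegSum_add_le hv
    simp only [sum_const, smul_eq_mul, hv2, if_true] at hbound ⊢
    change nbrDegSum G S v < degIn G S v * 3
    lia
  obtain ⟨hwS, hvw⟩ := mem_nbrIn.1 hw
  have hw2 := hS.two_le_degIn hwS
  have hcard : 1 < #(degClass G S 2) :=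
    one_lt_card.2 ⟨v, by simp [hv, hv2], w, by simp [hwS]; lia, hvw.ne⟩
  have := hS.card_degClass_add
  have := hS.four_mul_card_degClass_le
  lia

theorem card_degClass_two (hS : IsSixteenThirtyOne G S) : #(degClass G S 2) = 0 :=
  card_eq_zero.2 (filter_eq_empty_iff.2 fun _ hv h => by have := hS.three_le_degIn hv; lia)

theorem card_degClass_three (hS : IsSixteenThirtyOne G S) :
    #(degClass G S 3) = #(degClass G S 5) + 2 := by
  simpa [hS.card_degClass_two] using hS.card_degClass_add

theorem card_degClass_five_le (hS : IsSixteenThirtyOne G S) : #(degClass G S 5) ≤ 2 := by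
  have h4 := hS.four_mul_card_degClass_le
  rw [hS.card_degClass_two, hS.card_degClass_three] at h4
  lia

theorem nbrDegSum_add_eq_of_card_degClass_five (hS : IsSixteenThirtyOne G S)
    (h5 : #(degClass G S 5) = 2) (hv : v ∈ S) : nbrDegSum G S v + 4 = 5 * degIn G S v := by
  have hcount := hS.card_degClass_add_sum
  rw [hS.card_degClass_two, hS.card_degClass_three, h5] at hcount
  have hsum : ∑ v ∈ S, (nbrDegSum G S v + 4) = ∑ v ∈ S, 5 * degIn G S v := by lia
  exact (sum_eq_sum_iff_of_le fun v hv =>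
    (Nat.le_add_right _ _).trans (hS.nbrDegSum_add_le hv)).1 hsum v hv

theorem degIn_nbrIn_add_three_le (hS : IsSixteenThirtyOne G S) (hr : r ∈ S)
    (hr3 : degIn G S r = 3) (hw : w ∈ S) (hne : w ≠ r) (hrw : ¬G.Adj r w) :
    degIn G (nbrIn G S r) w + 3 ≤ degIn G S w := by
  classical
  have hwK : w ∈ nonNbrIn G S r := mem_nonNbrIn.2 ⟨hw, hne, hrw⟩
  have hsplit := degIn_nonNbrIn hr hwK
  have hcard := card_nonNbrIn (G := G) hr
  have hcard' := card_nonNbrIn (G := G) hwK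
  have hN := (tableRow_three hS.cliqueFree _ ((hS.indepNumLE.nonNbrIn hr).nonNbrIn hwK)).1
  simp only [orderTable] at hN
  rw [hS.card_eq] at hcard
  lia

theorem not_adj_of_degIn_eq_three (hS : IsSixteenThirtyOne G S) (hr : r ∈ degClass G S 3)
    (hw : w ∈ degClass G S 3) (hne : w ≠ r) (hv : v ∈ S) (hvr : G.Adj v r) : ¬G.Adj v w := by
  intro hvw
  rw [mem_degClass] at hr hw
  have hle := hS.degIn_nbrIn_add_three_le hr.1 hr.2 hw.1 hne
    (not_adj_of_cliqueFree_three hS.cliqueFree hvr hvw)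
  have hpos := degIn_pos (mem_nbrIn.2 ⟨hv, hvr.symm⟩) hvw.symm
  lia

theorem degIn_degClass_three_le_one (hS : IsSixteenThirtyOne G S) (hv : v ∈ S) :
    degIn G (degClass G S 3) v ≤ 1 := by
  refine card_le_one.2 fun a ha b hb => ?_
  rw [mem_nbrIn] at ha hb
  by_contra hne
  exact hS.not_adj_of_degIn_eq_three ha.1 hb.1 (Ne.symm hne) hv ha.2 hb.2

theorem degIn_add_ite_eq_four (hS : IsSixteenThirtyOne G S) (hr : r ∈ degClass G S 3)
    (hw : w ∈ nbrIn G S r) : (degIn G S w + if degIn G S w = 3 then 1 else 0) = 4 := by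
  obtain ⟨hrS, hr3⟩ := mem_degClass.1 hr
  have hpoint : ∀ w ∈ nbrIn G S r, 4 ≤ degIn G S w + if degIn G S w = 3 then 1 else 0 := by
    intro w hw
    have := hS.three_le_degIn (nbrIn_subset hw)
    split_ifs <;> lia
  have hone := hS.degIn_degClass_three_le_one hrS
  rw [degClass, degIn_filter, card_filter] at hone
  have hsum : ∑ w ∈ nbrIn G S r, (degIn G S w + if degIn G S w = 3 then 1 else 0) ≤ 12 := by
    have hbound := hS.nbrDegSum_add_le hrS
    rw [nbrDegSum] at hbound
    rw [sum_add_distrib]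
    lia
  have hconst : ∑ w ∈ nbrIn G S r, 4 = 12 := by
    rw [sum_const, ← degIn, hr3, smul_eq_mul]
  exact ((sum_eq_sum_iff_of_le hpoint).1
    (le_antisymm (sum_le_sum hpoint) (hconst ▸ hsum)) w hw).symm

theorem nbrDegSum_add_degIn_degClass (hS : IsSixteenThirtyOne G S) (hr : r ∈ degClass G S 3) :
    nbrDegSum G S r + degIn G (degClass G S 3) r = 12 := by
  rw [degClass, degIn_filter, card_filter, nbrDegSum, ← sum_add_distrib,
    sum_congr rfl fun w hw => hS.degIn_add_ite_eq_four hr hw, sum_const, ← degIn,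
    (mem_degClass.1 hr).2, smul_eq_mul]

theorem degIn_degClass_three (hS : IsSixteenThirtyOne G S) (hr : r ∈ degClass G S 3) :
    degIn G (degClass G S 3) r = 1 := by
  obtain ⟨hrS, hr3⟩ := mem_degClass.1 hr
  have hsum := hS.nbrDegSum_add_degIn_degClass hr
  have hbound := hS.nbrDegSum_add_le hrS
  have hone := hS.degIn_degClass_three_le_one hrS
  lia

theorem card_degClass_five (hS : IsSixteenThirtyOne G S) :
    #(degClass G S 5) = 0 ∨ #(degClass G S 5) = 2 := by
  have heven : Even #(degClass G S 3) := by
    rw [card_eq_sum_ones, ← sum_congr rfl fun r hr => hS.degIn_degClass_three hr]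
    exact even_degSum _
  rw [hS.card_degClass_three] at heven
  have hle := hS.card_degClass_five_le
  interval_cases #(degClass G S 5) <;> simp_all [Nat.even_iff]

end IsSixteenThirtyOne

section Twelve

variable {K : Finset V} {t : V}

theorem card_degClass_of_degSum_eq_forty (hcard : #K = 12) (hsum : degSum G K = 40)
    (hdeg : ∀ w ∈ K, degIn G K w = 3 ∨ degIn G K w = 4) :
    #(degClass G K 3) = 8 ∧ #(degClass G K 4) = 4 := by
  have hpoint3 : ∀ w ∈ K, degIn G K w + (if degIn G K w = 3 then 1 else 0) = 4 := by grind
  have hpoint4 : ∀ w ∈ K, degIn G K w = 3 + if degIn G K w = 4 then 1 else 0 := by grind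
  have hsum3 := sum_congr rfl hpoint3
  have hsum4 := sum_congr rfl hpoint4
  rw [← degSum] at hsum4
  rw [sum_add_distrib, ← degSum] at hsum3
  simp only [sum_add_distrib, ← card_filter, sum_const, hcard, hsum, smul_eq_mul] at hsum3 hsum4
  rw [degClass, degClass]
  lia

theorem nbrDegSum_eq_three_mul_add (hdeg : ∀ w ∈ K, degIn G K w = 3 ∨ degIn G K w = 4) (v : V) :
    nbrDegSum G K v = 3 * degIn G K v + degIn G (degClass G K 4) v := by
  have hpoint : ∀ w ∈ nbrIn G K v, degIn G K w = 3 + if degIn G K w = 4 then 1 else 0 :=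
    fun w hw => by have := hdeg w (nbrIn_subset hw); grind
  rw [nbrDegSum, sum_congr rfl hpoint, sum_add_distrib, sum_const, ← card_filter, degClass,
    degIn_filter, smul_eq_mul, mul_comm, degIn]

theorem degIn_degClass_three_add_degClass_four
    (hdeg : ∀ w ∈ K, degIn G K w = 3 ∨ degIn G K w = 4) (v : V) :
    degIn G (degClass G K 3) v + degIn G (degClass G K 4) v = degIn G K v := by
  classical
  have hunion : degClass G K 3 ∪ degClass G K 4 = K := by
    ext w
    simp only [mem_union, mem_degClass, ← and_or_left, and_iff_left_iff_imp]
    exact hdeg w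
  have hdisj : Disjoint (degClass G K 3) (degClass G K 4) :=
    disjoint_filter.2 fun _ _ h3 h4 => by lia
  rw [← degIn_union hdisj, hunion]

theorem degIn_degClass_four_add_two_le (hG : G.CliqueFree 3) (hK : IndepNumLE G K 4)
    (hcard : #K = 12) (hsum : degSum G K = 40)
    (hdeg : ∀ w ∈ K, degIn G K w = 3 ∨ degIn G K w = 4) (hv : v ∈ K) :
    degIn G (degClass G K 4) v + 2 ≤ degIn G K v := by
  classical
  have hrest := card_nonNbrIn (G := G) hv
  have hsplit := degSum_eq_degSum_nonNbrIn_add hG hv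
  have hedge := (tableRow_three hG _ (hK.nonNbrIn hv)).2
  rw [nbrDegSum_eq_three_mul_add hdeg, hsum] at hsplit
  rcases hdeg v hv with hd | hd
  · rw [show #(nonNbrIn G K v) = 8 by lia, edgeTable] at hedge
    lia
  · rw [show #(nonNbrIn G K v) = 7 by lia, edgeTable] at hedge
    lia

theorem degIn_degClass_four_eq_two (hG : G.CliqueFree 3) (hK : IndepNumLE G K 4)
    (hcard : #K = 12) (hsum : degSum G K = 40)
    (hdeg : ∀ w ∈ K, degIn G K w = 3 ∨ degIn G K w = 4) (ht : t ∈ degClass G K 4) :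
    degIn G (degClass G K 4) t = 2 := by
  classical
  obtain ⟨hcard3, hcard4⟩ := card_degClass_of_degSum_eq_forty hcard hsum hdeg
  have hfour : ∀ t ∈ degClass G K 4,
      degIn G (degClass G K 3) t + degIn G (degClass G K 4) t = 4 := by
    intro t ht
    rw [degIn_degClass_three_add_degClass_four hdeg, (mem_degClass.1 ht).2]
  have hcross : ∑ t ∈ degClass G K 4, degIn G (degClass G K 3) t ≤ 8 := by
    rw [sum_degIn_comm, ← hcard3, card_eq_sum_ones]
    refine sum_le_sum fun o ho => ?_
    rw [mem_degClass] at ho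
    have := degIn_degClass_four_add_two_le hG hK hcard hsum hdeg ho.1
    lia
  have htwo : ∀ t ∈ degClass G K 4, 2 ≤ degIn G (degClass G K 3) t := by
    intro t ht
    have := degIn_degClass_four_add_two_le hG hK hcard hsum hdeg (mem_degClass.1 ht).1
    have := hfour t ht
    have := (mem_degClass.1 ht).2
    lia
  have heq := (sum_eq_sum_iff_of_le htwo).1 (le_antisymm (sum_le_sum htwo)
    (by rwa [sum_const, hcard4])) t ht
  have := hfour t ht
  lia

end Twelve

namespace IsSixteenThirtyOne

section NoDegreeFive

variable [DecidableEq V]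

theorem card_nonNbrIn_eq_twelve (hS : IsSixteenThirtyOne G S) (hr : r ∈ degClass G S 3) :
    #(nonNbrIn G S r) = 12 := by
  obtain ⟨hrS, hr3⟩ := mem_degClass.1 hr
  have hcard := card_nonNbrIn (G := G) hrS
  rw [hS.card_eq] at hcard
  lia

theorem degSum_nonNbrIn_eq_forty (hS : IsSixteenThirtyOne G S) (hr : r ∈ degClass G S 3) :
    degSum G (nonNbrIn G S r) = 40 := by
  have hsplit := degSum_eq_degSum_nonNbrIn_add hS.cliqueFree (mem_degClass.1 hr).1
  have hnbr := hS.nbrDegSum_add_degIn_degClass hr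
  rw [hS.degIn_degClass_three hr] at hnbr
  rw [hS.degSum_eq] at hsplit
  lia

theorem degIn_eq_four_of_mem_nonNbrIn (hS : IsSixteenThirtyOne G S)
    (h5 : #(degClass G S 5) = 0) (hr : r ∈ degClass G S 3) (hw : w ∈ nonNbrIn G S r) :
    degIn G S w = 4 := by
  rw [mem_nonNbrIn] at hw
  have hcard := card_nonNbrIn (G := G) hr
  rw [hS.card_degClass_three, h5, hS.degIn_degClass_three hr] at hcard
  have hne3 : degIn G S w ≠ 3 := fun h3 =>
    card_ne_zero_of_mem (mem_nonNbrIn.2 ⟨mem_degClass.2 ⟨hw.1, h3⟩, hw.2⟩) (by lia)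
  have hne5 : degIn G S w ≠ 5 := fun h => card_ne_zero_of_mem (mem_degClass.2 ⟨hw.1, h⟩) h5
  have := hS.three_le_degIn hw.1
  have := hS.indepNumLE.degIn_le hS.cliqueFree w
  lia

theorem degIn_nonNbrIn_add_eq_four (hS : IsSixteenThirtyOne G S)
    (h5 : #(degClass G S 5) = 0) (hr : r ∈ degClass G S 3) (hw : w ∈ nonNbrIn G S r) :
    degIn G (nonNbrIn G S r) w + degIn G (nbrIn G S r) w = 4 := by
  rw [degIn_nonNbrIn (mem_degClass.1 hr).1 hw, hS.degIn_eq_four_of_mem_nonNbrIn h5 hr hw]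

theorem degIn_nonNbrIn_eq_three_or_four (hS : IsSixteenThirtyOne G S)
    (h5 : #(degClass G S 5) = 0) (hr : r ∈ degClass G S 3) (hw : w ∈ nonNbrIn G S r) :
    degIn G (nonNbrIn G S r) w = 3 ∨ degIn G (nonNbrIn G S r) w = 4 := by
  have hadd := hS.degIn_nonNbrIn_add_eq_four h5 hr hw
  have h4 := hS.degIn_eq_four_of_mem_nonNbrIn h5 hr hw
  rw [mem_nonNbrIn] at hw
  obtain ⟨hrS, hr3⟩ := mem_degClass.1 hr
  have := hS.degIn_nbrIn_add_three_le hrS hr3 hw.1 hw.2.1 hw.2.2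
  lia

theorem exists_two_le_degIn_of_card_degClass_five_eq_zero (hS : IsSixteenThirtyOne G S)
    (h5 : #(degClass G S 5) = 0) (hr : r ∈ degClass G S 3) {O : Finset V}
    (hO : O ⊆ degClass G (nonNbrIn G S r) 3) (hcard : 4 ≤ #O) :
    ∃ c ∈ nbrIn G S r, 2 ≤ degIn G O c := by
  refine exists_lt_of_sum_lt (f := fun _ => 1) ?_
  rw [sum_degIn_comm, ← card_eq_sum_ones, ← degIn, (mem_degClass.1 hr).2]
  have hone : ∀ o ∈ O, degIn G (nbrIn G S r) o = 1 := by
    intro o ho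
    have ho := mem_degClass.1 (hO ho)
    have := hS.degIn_nonNbrIn_add_eq_four h5 hr ho.1
    lia
  rw [sum_congr rfl hone, ← card_eq_sum_ones]
  lia

theorem isIndepSet_erase_union (hS : IsSixteenThirtyOne G S) (h5 : #(degClass G S 5) = 0)
    (hr : r ∈ degClass G S 3) {O : Finset V} {c : V} (hO : O ⊆ degClass G (nonNbrIn G S r) 3)
    (hc : c ∈ nbrIn G S r) :
    G.IsIndepSet (((nbrIn G S r).erase c ∪ nbrIn G O c : Finset V) : Set V) ∧
      #((nbrIn G S r).erase c ∪ nbrIn G O c) = 2 + degIn G O c := by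
  have hdisj : Disjoint ((nbrIn G S r).erase c) (nbrIn G O c) := by
    refine disjoint_left.2 fun x hxC hxO => ?_
    have hxK := mem_nonNbrIn.1 (mem_degClass.1 (hO (nbrIn_subset hxO))).1
    exact hxK.2.2 (mem_nbrIn.1 (mem_of_mem_erase hxC)).2
  refine ⟨isIndepSet_union ((isIndepSet_nbrIn hS.cliqueFree S r).mono (by simp))
    (isIndepSet_nbrIn hS.cliqueFree O c) ?_, ?_⟩
  · intro x hx o ho hxo
    obtain ⟨hxc, hx⟩ := mem_erase.1 hx
    obtain ⟨hoO, hco⟩ := mem_nbrIn.1 ho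
    obtain ⟨hoK, ho3⟩ := mem_degClass.1 (hO hoO)
    have := hS.degIn_nonNbrIn_add_eq_four h5 hr hoK
    exact hxc (eq_of_degIn_le_one (by lia) hx hc hxo.symm hco.symm)
  · rw [card_union_of_disjoint hdisj, card_erase_of_mem hc, ← degIn, ← degIn,
      (mem_degClass.1 hr).2]

theorem not_adj_erase_union (hS : IsSixteenThirtyOne G S) (h5 : #(degClass G S 5) = 0)
    (hr : r ∈ degClass G S 3) {O : Finset V} {c t : V} (hO : O ⊆ degClass G (nonNbrIn G S r) 3)
    (ht : t ∈ degClass G (nonNbrIn G S r) 4) (htO : ∀ o ∈ O, ¬G.Adj t o) :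
    t ∉ (nbrIn G S r).erase c ∪ nbrIn G O c ∧
      ∀ y ∈ (nbrIn G S r).erase c ∪ nbrIn G O c, ¬G.Adj t y := by
  obtain ⟨htK, ht4⟩ := mem_degClass.1 ht
  have hzero := hS.degIn_nonNbrIn_add_eq_four h5 hr htK
  constructor
  · intro htI
    rcases mem_union.1 htI with htC | htO
    · exact (mem_nonNbrIn.1 htK).2.2 (mem_nbrIn.1 (mem_of_mem_erase htC)).2
    · have := (mem_degClass.1 (hO (nbrIn_subset htO))).2
      lia
  · intro y hy
    rcases mem_union.1 hy with hyC | hyO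
    · exact degIn_eq_zero_iff.1 (by lia) y (mem_of_mem_erase hyC)
    · exact htO y (nbrIn_subset hyO)

theorem exists_not_adj_degClass_four (hS : IsSixteenThirtyOne G S)
    (h5 : #(degClass G S 5) = 0) (hr : r ∈ degClass G S 3) :
    ∃ t ∈ degClass G (nonNbrIn G S r) 4, ∃ t' ∈ degClass G (nonNbrIn G S r) 4,
      t ≠ t' ∧ ¬G.Adj t t' ∧
      4 ≤ #({o ∈ degClass G (nonNbrIn G S r) 3 | ¬G.Adj t o ∧ ¬G.Adj t' o}) := by
  have hcardK := hS.card_nonNbrIn_eq_twelve hr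
  have hsumK := hS.degSum_nonNbrIn_eq_forty hr
  have hdegK := fun w => hS.degIn_nonNbrIn_eq_three_or_four (w := w) h5 hr
  have hindepK := hS.indepNumLE.nonNbrIn (mem_degClass.1 hr).1
  set K := nonNbrIn G S r
  obtain ⟨hcard3, hcard4⟩ := card_degClass_of_degSum_eq_forty hcardK hsumK hdegK
  have htwo := fun t =>
    degIn_degClass_four_eq_two (t := t) hS.cliqueFree hindepK hcardK hsumK hdegK
  obtain ⟨t, ht⟩ := card_pos.1 (show 0 < #(degClass G K 4) by lia)
  obtain ⟨t', ht'⟩ := card_pos.1 (show 0 < #(nonNbrIn G (degClass G K 4) t) by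
    have := card_nonNbrIn (G := G) ht
    have := htwo t ht
    lia)
  obtain ⟨ht', hne, htt'⟩ := mem_nonNbrIn.1 ht'
  refine ⟨t, ht, t', ht', hne.symm, htt', ?_⟩
  have htwo3 : ∀ x ∈ degClass G K 4, degIn G (degClass G K 3) x = 2 := by
    intro x hx
    have hadd := degIn_degClass_three_add_degClass_four hdegK x
    rw [htwo x hx, (mem_degClass.1 hx).2] at hadd
    lia
  have hsub : degClass G K 3 \ (nbrIn G (degClass G K 3) t ∪ nbrIn G (degClass G K 3) t') ⊆
      {o ∈ degClass G K 3 | ¬G.Adj t o ∧ ¬G.Adj t' o} := by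
    intro o
    simp only [mem_sdiff, mem_union, mem_nbrIn, mem_filter]
    tauto
  have hcard := (le_card_sdiff _ _).trans (card_le_card hsub)
  have hunion := card_union_le (nbrIn G (degClass G K 3) t) (nbrIn G (degClass G K 3) t')
  have := htwo3 t ht
  have := htwo3 t' ht'
  rw [degIn] at *
  lia

end NoDegreeFive

/-- A nonadjacent pair `t, t'` of degree 4 beyond `r`, two of its common nonneighbours that share a
neighbour `c` of `r`, and the two other neighbours of `r` form an independent set. -/
theorem card_degClass_five_ne_zero (hS : IsSixteenThirtyOne G S) : #(degClass G S 5) ≠ 0 := by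
  classical
  intro h5
  obtain ⟨r, hr⟩ := card_pos.1 (show 0 < #(degClass G S 3) by rw [hS.card_degClass_three]; lia)
  obtain ⟨t, ht, t', ht', hne, htt', hcard⟩ := hS.exists_not_adj_degClass_four h5 hr
  obtain ⟨c, hc, hc2⟩ := hS.exists_two_le_degIn_of_card_degClass_five_eq_zero h5 hr
    (filter_subset _ _) hcard
  set O := {o ∈ degClass G (nonNbrIn G S r) 3 | ¬G.Adj t o ∧ ¬G.Adj t' o}
  have hO : O ⊆ degClass G (nonNbrIn G S r) 3 := filter_subset _ _
  obtain ⟨hI, hcardI⟩ := hS.isIndepSet_erase_union h5 hr hO hc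
  obtain ⟨htI, htadj⟩ :=
    hS.not_adj_erase_union h5 hr (c := c) hO ht fun _ ho => (mem_filter.1 ho).2.1
  obtain ⟨htI', htadj'⟩ :=
    hS.not_adj_erase_union h5 hr (c := c) hO ht' fun _ ho => (mem_filter.1 ho).2.2
  set I := (nbrIn G S r).erase c ∪ nbrIn G O c
  have hle := hS.indepNumLE (insert t (insert t' I)) ?_ (isIndepSet_insert
    (isIndepSet_insert hI htadj') (by simpa [htt'] using htadj))
  · rw [card_insert_of_notMem (by simp [hne, htI]), card_insert_of_notMem htI'] at hle
    lia
  · have hK : degClass G (nonNbrIn G S r) 4 ⊆ S := (filter_subset _ _).trans (filter_subset _ _)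
    refine insert_subset (hK ht) (insert_subset (hK ht') (union_subset ?_ ?_))
    · exact (erase_subset _ _).trans nbrIn_subset
    · exact nbrIn_subset.trans (hO.trans ((filter_subset _ _).trans (filter_subset _ _)))

theorem two_le_degIn_nonNbrIn [DecidableEq V] (hS : IsSixteenThirtyOne G S)
    (h5 : #(degClass G S 5) = 2) (hv : v ∈ degClass G S 5) (hw : w ∈ nonNbrIn G S v) :
    2 ≤ degIn G (nonNbrIn G S v) w := by
  obtain ⟨hvS, hv5⟩ := mem_degClass.1 hv
  have hsum := hS.nbrDegSum_add_eq_of_card_degClass_five h5 hvS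
  have hsplit := degSum_eq_degSum_nonNbrIn_add hS.cliqueFree hvS
  have hcard := card_nonNbrIn (G := G) hvS
  have hindep := hS.indepNumLE.nonNbrIn hvS
  rw [hS.degSum_eq] at hsplit
  rw [hS.card_eq] at hcard
  set M := nonNbrIn G S v
  have hpos : ∀ x ∈ M, 1 ≤ degIn G M x := by
    intro x hx
    have hrest := card_nonNbrIn (G := G) hx
    have := (tableRow_three hS.cliqueFree _ (hindep.nonNbrIn hx)).1
    rw [orderTable] at this
    lia
  by_contra! hlt
  have hone : degIn G M w = 1 := le_antisymm (Nat.le_of_lt_succ hlt) (hpos w hw)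
  have hrest := card_nonNbrIn (G := G) hw
  have hedge := (tableRow_three hS.cliqueFree _ (hindep.nonNbrIn hw)).2
  rw [show #(nonNbrIn G M w) = 8 by lia, edgeTable] at hedge
  have hsplitM := degSum_eq_degSum_nonNbrIn_add hS.cliqueFree hw
  have hnbr : #(nbrIn G M w) • 1 ≤ nbrDegSum G M w :=
    card_nsmul_le_sum _ _ _ fun y hy => hpos y (nbrIn_subset hy)
  rw [← degIn, hone, smul_eq_mul] at hnbr
  lia

theorem degIn_nbrIn_add_two_eq (hS : IsSixteenThirtyOne G S) (h5 : #(degClass G S 5) = 2)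
    (hv : v ∈ degClass G S 5) (hw : w ∈ S) (hne : w ≠ v) (hvw : ¬G.Adj v w) :
    degIn G (nbrIn G S v) w + 2 = degIn G S w := by
  classical
  obtain ⟨hvS, hv5⟩ := mem_degClass.1 hv
  have hwM : w ∈ nonNbrIn G S v := mem_nonNbrIn.2 ⟨hw, hne, hvw⟩
  have hsum := hS.nbrDegSum_add_eq_of_card_degClass_five h5 hvS
  have hsplit := degSum_eq_degSum_nonNbrIn_add hS.cliqueFree hvS
  have hcard := card_nonNbrIn (G := G) hvS
  rw [hS.degSum_eq] at hsplit
  rw [hS.card_eq] at hcard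
  have htwo := fun x => hS.two_le_degIn_nonNbrIn h5 hv (w := x)
  have hconst : ∑ x ∈ nonNbrIn G S v, 2 = ∑ x ∈ nonNbrIn G S v, degIn G (nonNbrIn G S v) x := by
    rw [← degSum, sum_const, smul_eq_mul]
    lia
  have := (sum_eq_sum_iff_of_le htwo).1 hconst w hwM
  have := degIn_nonNbrIn hvS hwM
  lia

end IsSixteenThirtyOne

variable [DecidableEq V] {q q' o s x y : V}

/-- `q` and `q'` are adjacent and are the only vertices of degree 5 in a subgraph as in
`IsSixteenThirtyOne`. -/
structure IsHubPair (G : SimpleGraph V) [DecidableRel G.Adj] (S : Finset V) (q q' : V) : Prop where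
  adj : G.Adj q q'
  degClass_five : degClass G S 5 = {q, q'}
  isSixteenThirtyOne : IsSixteenThirtyOne G S

/-- The vertices of `S` of degree other than 3 that are adjacent to neither `q` nor `q'`. -/
def outerIn (G : SimpleGraph V) [DecidableRel G.Adj] (S : Finset V) (q q' : V) : Finset V :=
  S \ (nbrIn G S q ∪ nbrIn G S q' ∪ degClass G S 3)

theorem mem_outerIn : o ∈ outerIn G S q q' ↔
    o ∈ S ∧ ¬G.Adj q o ∧ ¬G.Adj q' o ∧ degIn G S o ≠ 3 := by
  simp only [outerIn, mem_sdiff, mem_union, mem_nbrIn, mem_degClass]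
  tauto

theorem outerIn_comm : outerIn G S q q' = outerIn G S q' q := by
  rw [outerIn, outerIn, union_comm (nbrIn G S q)]

theorem nbrIn_union_subset : nbrIn G S q ∪ nbrIn G S q' ∪ degClass G S 3 ⊆ S :=
  union_subset (union_subset nbrIn_subset nbrIn_subset) (filter_subset _ _)

theorem IsSixteenThirtyOne.exists_isHubPair (hS : IsSixteenThirtyOne G S)
    (h5 : #(degClass G S 5) = 2) : ∃ q q', IsHubPair G S q q' := by
  obtain ⟨q, q', -, hD⟩ := card_eq_two.1 h5
  obtain ⟨hq, hq5⟩ := mem_degClass.1 (show q ∈ degClass G S 5 by simp [hD])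
  refine ⟨q, q', ?_, hD, hS⟩
  by_contra hadj
  have hle : nbrDegSum G S q ≤ #(nbrIn G S q) • 4 := sum_le_card_nsmul _ _ _ fun w hw => by
    have hne : degIn G S w ≠ 5 := by
      intro hw5
      have hwD : w ∈ degClass G S 5 := mem_degClass.2 ⟨nbrIn_subset hw, hw5⟩
      have hqw := (mem_nbrIn.1 hw).2
      rw [hD, mem_insert, mem_singleton] at hwD
      rcases hwD with rfl | rfl
      exacts [G.irrefl hqw, hadj hqw]
    have := hS.indepNumLE.degIn_le hS.cliqueFree w
    lia
  have := hS.nbrDegSum_add_eq_of_card_degClass_five h5 hq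
  rw [← degIn, hq5, smul_eq_mul] at hle
  lia

namespace IsHubPair

theorem symm (hQ : IsHubPair G S q q') : IsHubPair G S q' q :=
  ⟨hQ.adj.symm, by rw [hQ.degClass_five, pair_comm], hQ.isSixteenThirtyOne⟩

theorem card_degClass_five (hQ : IsHubPair G S q q') : #(degClass G S 5) = 2 := by
  rw [hQ.degClass_five, card_pair hQ.adj.ne]

theorem mem_degClass_five (hQ : IsHubPair G S q q') : q ∈ degClass G S 5 := by
  simp [hQ.degClass_five]

theorem not_adj_of_mem_degClass_three (hQ : IsHubPair G S q q') (hr : r ∈ degClass G S 3) :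
    ¬G.Adj q r := by
  intro hqr
  obtain ⟨hq, hq5⟩ := mem_degClass.1 hQ.mem_degClass_five
  have := hQ.isSixteenThirtyOne.degIn_add_ite_eq_four hr (mem_nbrIn.2 ⟨hq, hqr.symm⟩)
  simp [hq5] at this

theorem degIn_nbrIn_add_two_eq (hQ : IsHubPair G S q q') (hw : w ∈ S) (hw5 : degIn G S w ≠ 5)
    (hqw : ¬G.Adj q w) : degIn G (nbrIn G S q) w + 2 = degIn G S w := by
  refine hQ.isSixteenThirtyOne.degIn_nbrIn_add_two_eq hQ.card_degClass_five hQ.mem_degClass_five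
    hw ?_ hqw
  rintro rfl
  exact hw5 (mem_degClass.1 hQ.mem_degClass_five).2

theorem degIn_nbrIn_of_mem_degClass_three (hQ : IsHubPair G S q q') (hr : r ∈ degClass G S 3) :
    degIn G (nbrIn G S q) r = 1 := by
  obtain ⟨hrS, hr3⟩ := mem_degClass.1 hr
  have := hQ.degIn_nbrIn_add_two_eq hrS (by lia) (hQ.not_adj_of_mem_degClass_three hr)
  lia

theorem disjoint_nbrIn (hQ : IsHubPair G S q q') : Disjoint (nbrIn G S q) (nbrIn G S q') := by
  refine disjoint_left.2 fun x hx hx' => ?_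
  exact not_adj_of_cliqueFree_three hQ.isSixteenThirtyOne.cliqueFree hQ.adj
    (mem_nbrIn.1 hx).2 (mem_nbrIn.1 hx').2

theorem disjoint_union_degClass_three (hQ : IsHubPair G S q q') :
    Disjoint (nbrIn G S q ∪ nbrIn G S q') (degClass G S 3) := by
  refine disjoint_left.2 fun x hx hx3 => ?_
  rcases mem_union.1 hx with hx | hx
  · exact hQ.not_adj_of_mem_degClass_three hx3 (mem_nbrIn.1 hx).2
  · exact hQ.symm.not_adj_of_mem_degClass_three hx3 (mem_nbrIn.1 hx).2

theorem degIn_add_degIn_outerIn (hQ : IsHubPair G S q q') (x : V) :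
    degIn G (nbrIn G S q) x + degIn G (nbrIn G S q') x + degIn G (degClass G S 3) x +
      degIn G (outerIn G S q q') x = degIn G S x := by
  rw [← degIn_union hQ.disjoint_nbrIn, ← degIn_union hQ.disjoint_union_degClass_three, add_comm,
    outerIn, degIn_sdiff_add nbrIn_union_subset]

theorem card_outerIn (hQ : IsHubPair G S q q') : #(outerIn G S q q') = 2 := by
  have hq := (mem_degClass.1 hQ.mem_degClass_five).2
  have hq' := (mem_degClass.1 hQ.symm.mem_degClass_five).2
  rw [outerIn, card_sdiff_of_subset nbrIn_union_subset, card_union_of_disjoint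
    hQ.disjoint_union_degClass_three, card_union_of_disjoint hQ.disjoint_nbrIn, ← degIn, ← degIn,
    hq, hq', hQ.isSixteenThirtyOne.card_degClass_three, hQ.card_degClass_five,
    hQ.isSixteenThirtyOne.card_eq]

theorem degIn_of_mem_outerIn (hQ : IsHubPair G S q q') (ho : o ∈ outerIn G S q q') :
    degIn G S o = 4 := by
  obtain ⟨hoS, hqo, hqo', ho3⟩ := mem_outerIn.1 ho
  have h5 : degIn G S o ≠ 5 := by
    intro ho5
    have hoD : o ∈ degClass G S 5 := mem_degClass.2 ⟨hoS, ho5⟩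
    rw [hQ.degClass_five, mem_insert, mem_singleton] at hoD
    rcases hoD with rfl | rfl
    exacts [hqo' hQ.adj.symm, hqo hQ.adj]
  have := hQ.isSixteenThirtyOne.three_le_degIn hoS
  have := hQ.isSixteenThirtyOne.indepNumLE.degIn_le hQ.isSixteenThirtyOne.cliqueFree o
  lia

theorem degIn_nbrIn_of_mem_outerIn (hQ : IsHubPair G S q q') (ho : o ∈ outerIn G S q q') :
    degIn G (nbrIn G S q) o = 2 := by
  have h4 := hQ.degIn_of_mem_outerIn ho
  obtain ⟨hoS, hqo, -⟩ := mem_outerIn.1 ho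
  have := hQ.degIn_nbrIn_add_two_eq hoS (by lia) hqo
  lia

theorem not_adj_of_mem_outerIn (hQ : IsHubPair G S q q') (ho : o ∈ outerIn G S q q')
    (hr : r ∈ degClass G S 3) : ¬G.Adj o r := by
  have hsum := hQ.degIn_add_degIn_outerIn o
  have := hQ.degIn_nbrIn_of_mem_outerIn ho
  have := hQ.symm.degIn_nbrIn_of_mem_outerIn (by rwa [outerIn_comm])
  rw [hQ.degIn_of_mem_outerIn ho] at hsum
  exact degIn_eq_zero_iff.1 (by lia) r hr

theorem exists_mem_outerIn_adj (hQ : IsHubPair G S q q') (hr : r ∈ degClass G S 3)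
    (hx : x ∈ nbrIn G S q) (hrx : G.Adj r x) : ∃ o ∈ outerIn G S q q', G.Adj x o := by
  obtain ⟨hxS, hqx⟩ := mem_nbrIn.1 hx
  have hsum := hQ.degIn_add_degIn_outerIn x
  have hx3 : degIn G S x ≠ 3 := fun h =>
    hQ.not_adj_of_mem_degClass_three (mem_degClass.2 ⟨hxS, h⟩) hqx
  have hx4 := hQ.isSixteenThirtyOne.degIn_add_ite_eq_four hr (mem_nbrIn.2 ⟨hxS, hrx⟩)
  rw [if_neg hx3, add_zero] at hx4
  have hzero : degIn G (nbrIn G S q) x = 0 := degIn_eq_zero_iff.2 fun y hy =>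
    not_adj_of_cliqueFree_three hQ.isSixteenThirtyOne.cliqueFree hqx (mem_nbrIn.1 hy).2
  have htwo := hQ.symm.degIn_nbrIn_add_two_eq hxS (by lia)
    fun h => disjoint_left.1 hQ.disjoint_nbrIn hx (mem_nbrIn.2 ⟨hxS, h⟩)
  have hone := hQ.isSixteenThirtyOne.degIn_degClass_three_le_one hxS
  exact degIn_pos_iff.1 (by lia)

theorem mem_nbrIn_or_mem_degClass_three (hQ : IsHubPair G S q q') (hr : r ∈ degClass G S 3)
    (hx : x ∈ nbrIn G S r) :
    x ∈ nbrIn G S q ∨ x ∈ nbrIn G S q' ∨ x ∈ degClass G S 3 := by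
  obtain ⟨hxS, hrx⟩ := mem_nbrIn.1 hx
  by_contra! h
  exact hQ.not_adj_of_mem_outerIn (o := x) (by simp [outerIn, h, hxS]) hr hrx.symm

theorem card_filter_not_adj (hQ : IsHubPair G S q q') (ho : o ∈ outerIn G S q q') :
    #{z ∈ nbrIn G S q | ¬G.Adj o z} = 3 := by
  have hsplit := card_filter_add_card_filter_not (s := nbrIn G S q) (G.Adj o)
  have htwo := hQ.degIn_nbrIn_of_mem_outerIn ho
  rw [← degIn, (mem_degClass.1 hQ.mem_degClass_five).2] at hsplit
  rw [degIn, nbrIn] at htwo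
  lia

theorem not_adj_filter_not_adj (hQ : IsHubPair G S q q') (hr : r ∈ degClass G S 3)
    (hx : x ∈ nbrIn G S q) (hrx : G.Adj r x) (hxo : G.Adj x o) :
    ∀ z ∈ {z ∈ nbrIn G S q | ¬G.Adj o z}, ¬G.Adj r z := by
  intro z hz hrz
  obtain ⟨hz, hoz⟩ := mem_filter.1 hz
  obtain rfl := eq_of_degIn_le_one (hQ.degIn_nbrIn_of_mem_degClass_three hr).le hz hx hrz hrx
  exact hoz hxo.symm

/-- Otherwise `o`, `r`, `s` and the three neighbours of `q'` not adjacent to `o` form an independent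
set. -/
theorem not_adj_outerIn (hQ : IsHubPair G S q q') (hr : r ∈ degClass G S 3)
    (hs : s ∈ degClass G S 3) (hne : s ≠ r) (hrs : ¬G.Adj r s) (ho : o ∈ outerIn G S q q')
    (hx : x ∈ nbrIn G S q') (hrx : G.Adj r x) (hxo : G.Adj x o) (hy : y ∈ nbrIn G S q')
    (hsy : G.Adj s y) : ¬G.Adj y o := by
  intro hyo
  set I := {z ∈ nbrIn G S q' | ¬G.Adj o z}
  have hIq' : I ⊆ nbrIn G S q' := filter_subset _ _
  have hcardI : #I = 3 := hQ.symm.card_filter_not_adj (by rwa [outerIn_comm])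
  have hIIndep : G.IsIndepSet (I : Set V) :=
    (isIndepSet_nbrIn hQ.isSixteenThirtyOne.cliqueFree S q').mono (mod_cast hIq')
  have hnotMem : ∀ r ∈ degClass G S 3, r ∉ I := fun r hr hrI =>
    hQ.symm.not_adj_of_mem_degClass_three hr (mem_nbrIn.1 (hIq' hrI)).2
  have hoI : o ∉ I := fun h => (mem_outerIn.1 ho).2.2.1 (mem_nbrIn.1 (hIq' h)).2
  have hone : ∀ {r}, r ∈ degClass G S 3 → o ≠ r := by
    rintro _ hr rfl
    exact (mem_outerIn.1 ho).2.2.2 (mem_degClass.1 hr).2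
  have hJ : G.IsIndepSet ((insert o (insert r (insert s I)) : Finset V) : Set V) := by
    refine isIndepSet_insert (isIndepSet_insert (isIndepSet_insert hIIndep ?_) ?_) ?_
    · exact hQ.symm.not_adj_filter_not_adj hs hy hsy hyo
    · exact (forall_mem_insert _ _ _).2 ⟨hrs, hQ.symm.not_adj_filter_not_adj hr hx hrx hxo⟩
    · simp only [mem_insert, forall_eq_or_imp]
      exact ⟨hQ.not_adj_of_mem_outerIn ho hr, hQ.not_adj_of_mem_outerIn ho hs,
        fun z hz => (mem_filter.1 hz).2⟩
  have hle := hQ.isSixteenThirtyOne.indepNumLE _ ?_ hJ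
  · rw [card_insert_of_notMem, card_insert_of_notMem, card_insert_of_notMem, hcardI] at hle
    · lia
    · exact hnotMem s hs
    · simp [hne.symm, hnotMem r hr]
    · simp [hone hr, hone hs, hoI]
  · simp only [insert_subset_iff]
    exact ⟨(mem_outerIn.1 ho).1, (mem_degClass.1 hr).1, (mem_degClass.1 hs).1,
      hIq'.trans nbrIn_subset⟩

theorem not_adj_outerIn_of_adj (hQ : IsHubPair G S q q') (hr : r ∈ degClass G S 3)
    (ho : o ∈ outerIn G S q q') (hx : x ∈ nbrIn G S r) (hy : y ∈ nbrIn G S r) (hxy : x ≠ y)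
    (hxo : G.Adj x o) : ¬G.Adj y o := by
  intro hyo
  have hro := hQ.not_adj_of_mem_outerIn ho hr
  have ho4 := hQ.degIn_of_mem_outerIn ho
  obtain ⟨hrS, hr3⟩ := mem_degClass.1 hr
  obtain ⟨hoS, -, -, ho3⟩ := mem_outerIn.1 ho
  have hle := hQ.isSixteenThirtyOne.degIn_nbrIn_add_three_le hrS hr3 hoS
    (by rintro rfl; exact ho3 hr3) fun h => hro h.symm
  exact hxy (eq_of_degIn_le_one (by lia) hx hy hxo.symm hyo.symm)

theorem not_adj_of_adj_of_adj (hQ : IsHubPair G S q q') (hr : r ∈ degClass G S 3)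
    (hs : s ∈ degClass G S 3) (hne : s ≠ r) (hrs : ¬G.Adj r s) (hx : x ∈ nbrIn G S q)
    (hrx : G.Adj r x) (hy : y ∈ nbrIn G S q') (hsy : G.Adj s y) : ¬G.Adj x y := by
  obtain ⟨z, hz, hrz⟩ : ∃ z ∈ nbrIn G S q', G.Adj r z :=
    degIn_pos_iff.1 (by rw [hQ.symm.degIn_nbrIn_of_mem_degClass_three hr]; lia)
  obtain ⟨a, ha, hxa⟩ := hQ.exists_mem_outerIn_adj hr hx hrx
  obtain ⟨b, hb, hyb⟩ := hQ.symm.exists_mem_outerIn_adj hs hy hsy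
  obtain ⟨c, hc, hzc⟩ := hQ.symm.exists_mem_outerIn_adj hr hz hrz
  rw [outerIn_comm] at hb hc
  have hxz : x ≠ z := disjoint_iff_ne.1 hQ.disjoint_nbrIn x hx z hz
  have hac : a ≠ c := by
    rintro rfl
    exact hQ.not_adj_outerIn_of_adj hr ha (mem_nbrIn.2 ⟨nbrIn_subset hx, hrx⟩)
      (mem_nbrIn.2 ⟨nbrIn_subset hz, hrz⟩) hxz hxa hzc
  have hbc : b ≠ c := by
    rintro rfl
    exact hQ.not_adj_outerIn hr hs hne hrs hb hz hrz hzc hy hsy hyb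
  have hab : a = b := by
    by_contra hab
    have hle := card_le_card (show {a, b, c} ⊆ outerIn G S q q' by simp [insert_subset_iff, *])
    rw [card_eq_three.2 ⟨a, b, c, hab, hac, hbc, rfl⟩, hQ.card_outerIn] at hle
    lia
  exact not_adj_of_cliqueFree_three hQ.isSixteenThirtyOne.cliqueFree hxa.symm (hab ▸ hyb.symm)

theorem not_adj_nbrIn_of_not_adj (hQ : IsHubPair G S q q') (hr : r ∈ degClass G S 3)
    (hs : s ∈ degClass G S 3) (hne : s ≠ r) (hrs : ¬G.Adj r s) :
    ∀ x ∈ nbrIn G S r, ∀ y ∈ nbrIn G S s, ¬G.Adj x y := by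
  intro x hx y hy hxy
  have hS := hQ.isSixteenThirtyOne
  have hx' := hQ.mem_nbrIn_or_mem_degClass_three hr hx
  have hy' := hQ.mem_nbrIn_or_mem_degClass_three hs hy
  obtain ⟨hxS, hrx⟩ := mem_nbrIn.1 hx
  obtain ⟨hyS, hsy⟩ := mem_nbrIn.1 hy
  have hthree : ∀ {v r w}, v ∈ S → r ∈ degClass G S 3 → w ∈ degClass G S 3 → G.Adj v r →
      G.Adj v w → r = w := fun hv hr hw hvr hvw =>
    eq_of_degIn_le_one (hS.degIn_degClass_three_le_one hv) hr hw hvr hvw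
  rcases hx' with hxq | hxq | hx3
  · rcases hy' with hyq | hyq | hy3
    · exact isIndepSet_nbrIn hS.cliqueFree S q hxq hyq hxy.ne hxy
    · exact hQ.not_adj_of_adj_of_adj hr hs hne hrs hxq hrx hyq hsy hxy
    · exact hrs (hthree hxS hr hy3 hrx.symm hxy ▸ hsy.symm)
  · rcases hy' with hyq | hyq | hy3
    · exact hQ.not_adj_of_adj_of_adj hs hr hne.symm (fun h => hrs h.symm) hyq hsy hxq hrx hxy.symm
    · exact isIndepSet_nbrIn hS.cliqueFree S q' hxq hyq hxy.ne hxy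
    · exact hrs (hthree hxS hr hy3 hrx.symm hxy ▸ hsy.symm)
  · exact hrs (hthree hyS hs hx3 hsy.symm hxy.symm ▸ hrx)

/-- For two nonadjacent vertices `r`, `s` of degree 3, the union of their neighbourhoods is an
independent set. -/
theorem false (hQ : IsHubPair G S q q') : False := by
  have hS := hQ.isSixteenThirtyOne
  have hcard3 := hS.card_degClass_three
  rw [hQ.card_degClass_five] at hcard3
  obtain ⟨r, hr⟩ := card_pos.1 (show 0 < #(degClass G S 3) by lia)
  obtain ⟨s, hs⟩ := card_pos.1 (show 0 < #(nonNbrIn G (degClass G S 3) r) by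
    have := card_nonNbrIn (G := G) hr
    have := hS.degIn_degClass_three hr
    lia)
  obtain ⟨hs, hne, hrs⟩ := mem_nonNbrIn.1 hs
  have hdisj : Disjoint (nbrIn G S r) (nbrIn G S s) := disjoint_left.2 fun x hx hx' =>
    hS.not_adj_of_degIn_eq_three hr hs hne (nbrIn_subset hx) (mem_nbrIn.1 hx).2.symm
      (mem_nbrIn.1 hx').2.symm
  have hle := hS.indepNumLE _ (union_subset nbrIn_subset nbrIn_subset)
    (isIndepSet_union (isIndepSet_nbrIn hS.cliqueFree S r) (isIndepSet_nbrIn hS.cliqueFree S s)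
      (hQ.not_adj_nbrIn_of_not_adj hr hs hne hrs))
  rw [card_union_of_disjoint hdisj, ← degIn, ← degIn, (mem_degClass.1 hr).2,
    (mem_degClass.1 hs).2] at hle
  lia

end IsHubPair

end Sixteen

section EdgeTable

variable {V : Type*} {G : SimpleGraph V} [DecidableRel G.Adj] {S : Finset V}

theorem not_isSixteenThirtyOne : ¬IsSixteenThirtyOne G S := by
  classical
  intro hS
  rcases hS.card_degClass_five with h5 | h5
  · exact hS.card_degClass_five_ne_zero h5
  · obtain ⟨q, q', hQ⟩ := hS.exists_isHubPair h5
    exact hQ.false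

theorem tableRow_five (hG : G.CliqueFree 3) : TableRow G 5 := by
  intro S hS
  have hrow := tableRow_four hG
  have hcard := card_le_of_edgeStep hG hrow hS (N := 18) (β := 5) (by decide)
  refine ⟨hcard, ?_⟩
  rcases (by decide : ∀ n ≤ 18, n = 16 ∨ edgeTable 5 n = 0 ∨
    ∃ β ≤ 5, EdgeStep 4 n (edgeTable 5 n) β) _ hcard with hS16 | hzero | ⟨β, -, hstep⟩
  · have hlow := two_mul_le_degSum_of_edgeStep hG hrow hS (m := 31) (β := 2)
      (by rw [hS16]; decide)
    rw [hS16, edgeTable]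
    have hne : degSum G S ≠ 62 := fun hsum => not_isSixteenThirtyOne ⟨hG, hS, hS16, hsum⟩
    obtain ⟨e, he⟩ := even_degSum (G := G) S
    lia
  · simp [hzero]
  · exact two_mul_le_degSum_of_edgeStep hG hrow hS hstep

theorem tableRow_six (hG : G.CliqueFree 3) : TableRow G 6 :=
  (tableRow_five hG).succ hG (by decide) (by decide)

theorem tableRow_seven (hG : G.CliqueFree 3) : TableRow G 7 :=
  (tableRow_six hG).succ hG (by decide) (by decide)

end EdgeTable

section ExactlyOneNeighbour

variable {V : Type*} {G : SimpleGraph V} [DecidableRel G.Adj] {A B H S T : Finset V} {w y y' : V}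

/-- The vertices of `H` with exactly one neighbour in `A`. -/
def onceInto (G : SimpleGraph V) [DecidableRel G.Adj] (A H : Finset V) : Finset V :=
  {w ∈ H | degIn G A w = 1}

/-- The vertices of `H` with exactly one neighbour in `B` and none in `A`. -/
def onlyInto (G : SimpleGraph V) [DecidableRel G.Adj] (A B H : Finset V) : Finset V :=
  {w ∈ H | degIn G A w = 0 ∧ degIn G B w = 1}

theorem mem_onceInto : w ∈ onceInto G A H ↔ w ∈ H ∧ degIn G A w = 1 := by
  simp [onceInto]

theorem mem_onlyInto : w ∈ onlyInto G A B H ↔ w ∈ H ∧ degIn G A w = 0 ∧ degIn G B w = 1 := by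
  simp [onlyInto]

theorem onceInto_subset : onceInto G A H ⊆ H :=
  filter_subset _ _

theorem sum_sum_nbrIn_of_degIn_eq_one (h : ∀ w ∈ S, degIn G T w = 1) (f : V → ℕ) :
    ∑ y ∈ T, ∑ w ∈ nbrIn G S y, f w = ∑ w ∈ S, f w := by
  rw [sum_sum_nbrIn]
  exact sum_congr rfl fun w hw => by rw [h w hw, one_mul]

theorem sum_degIn_eq_card (h : ∀ w ∈ S, degIn G T w = 1) : ∑ y ∈ T, degIn G S y = #S := by
  rw [sum_degIn_comm, sum_congr rfl h, card_eq_sum_ones]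

theorem degSum_eq_sum_sum_degIn_nbrIn (h : ∀ w ∈ S, degIn G T w = 1) :
    degSum G S = ∑ y ∈ T, ∑ y' ∈ T, ∑ w ∈ nbrIn G S y, degIn G (nbrIn G S y') w := by
  have hdeg (w : V) : degIn G S w = ∑ y' ∈ T, degIn G (nbrIn G S y') w := by
    have := sum_sum_nbrIn_of_degIn_eq_one h fun x => if G.Adj w x then 1 else 0
    simp only [← card_filter] at this
    exact this.symm
  rw [degSum, ← sum_sum_nbrIn_of_degIn_eq_one h]
  refine sum_congr rfl fun y _ => ?_
  rw [sum_comm]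
  exact sum_congr rfl fun w _ => hdeg w

theorem disjoint_nbrIn_onceInto (hy : y ∈ B) (hy' : y' ∈ B) (hne : y ≠ y') :
    Disjoint (nbrIn G (onceInto G B H) y) (nbrIn G (onceInto G B H) y') := by
  refine Finset.disjoint_left.2 fun w hw hw' => ?_
  obtain ⟨hw, hyw⟩ := mem_nbrIn.1 hw
  exact hne (eq_of_degIn_le_one (mem_onceInto.1 hw).2.le hy hy' hyw.symm
    (mem_nbrIn.1 hw').2.symm)

theorem card_nbrIn_union [DecidableEq V] (hy : y ∈ B) (hy' : y' ∈ B) (hne : y ≠ y') :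
    #(nbrIn G (onceInto G B H) y ∪ nbrIn G (onceInto G B H) y') =
      degIn G (onceInto G B H) y + degIn G (onceInto G B H) y' :=
  card_union_of_disjoint (disjoint_nbrIn_onceInto hy hy' hne)

end ExactlyOneNeighbour

section FarPair

variable {V : Type*} [DecidableEq V] {G : SimpleGraph V} {A B H S T : Finset V} {w x y y' : V}

/-- The neighbourhoods `A` and `B` of two vertices `u` and `v` at distance greater than three in a
triangle-free graph with independence number at most `9`, together with the set `H` of the
remaining vertices, when the sizes are those forced by a total of at least `40` vertices. The
vertices `u` and `v` themselves are not recorded: they only serve to lower the bounds for the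
independence numbers of `H ∪ B`, `H ∪ A` and `H`. -/
structure IsFarPair (G : SimpleGraph V) (A B H : Finset V) : Prop where
  cliqueFree : G.CliqueFree 3
  isIndepSet_left : G.IsIndepSet (A : Set V)
  isIndepSet_right : G.IsIndepSet (B : Set V)
  not_adj : ∀ a ∈ A, ∀ b ∈ B, ¬G.Adj a b
  disjoint : Disjoint A B
  disjoint_rest_left : Disjoint H A
  disjoint_rest_right : Disjoint H B
  indepNumLE_union : IndepNumLE G (H ∪ (A ∪ B)) 9
  indepNumLE_left : IndepNumLE G (H ∪ A) 8
  indepNumLE_right : IndepNumLE G (H ∪ B) 8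
  indepNumLE : IndepNumLE G H 7
  card_add_card : #A + #B = 9
  card_eq : #H = 29

namespace IsFarPair

theorem symm (h : IsFarPair G A B H) : IsFarPair G B A H where
  cliqueFree := h.cliqueFree
  isIndepSet_left := h.isIndepSet_right
  isIndepSet_right := h.isIndepSet_left
  not_adj b hb a ha hba := h.not_adj a ha b hb hba.symm
  disjoint := h.disjoint.symm
  disjoint_rest_left := h.disjoint_rest_right
  disjoint_rest_right := h.disjoint_rest_left
  indepNumLE_union := union_comm A B ▸ h.indepNumLE_union
  indepNumLE_left := h.indepNumLE_right
  indepNumLE_right := h.indepNumLE_left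
  indepNumLE := h.indepNumLE
  card_add_card := add_comm #A #B ▸ h.card_add_card
  card_eq := h.card_eq

theorem disjoint_union (h : IsFarPair G A B H) : Disjoint H (A ∪ B) :=
  disjoint_union_right.2 ⟨h.disjoint_rest_left, h.disjoint_rest_right⟩

theorem card_right (h : IsFarPair G A B H) (hA : #A = 5) : #B = 4 := by
  have := h.card_add_card
  lia

variable [DecidableRel G.Adj]

theorem degIn_add_degIn_left_le (h : IsFarPair G A B H) (w : V) :
    degIn G H w + degIn G A w ≤ 8 := by
  rw [← degIn_union h.disjoint_rest_left]
  exact h.indepNumLE_left.degIn_le h.cliqueFree w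

theorem degIn_add_degIn_add_degIn_le (h : IsFarPair G A B H) (w : V) :
    degIn G H w + (degIn G A w + degIn G B w) ≤ 9 := by
  rw [← degIn_union h.disjoint, ← degIn_union h.disjoint_union]
  exact h.indepNumLE_union.degIn_le h.cliqueFree w

theorem degIn_add_degIn_pos (h : IsFarPair G A B H) (hw : w ∈ H) :
    0 < degIn G A w + degIn G B w := by
  rw [← degIn_union h.disjoint]
  by_contra! hzero
  have hind := isIndepSet_insert (isIndepSet_union h.isIndepSet_left h.isIndepSet_right h.not_adj)
    (degIn_eq_zero_iff.1 (Nat.le_zero.1 hzero))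
  have hle := h.indepNumLE_union _
    (insert_subset (mem_union_left _ hw) subset_union_right) hind
  rw [card_insert_of_notMem (Finset.disjoint_left.1 h.disjoint_union hw),
    card_union_of_disjoint h.disjoint, h.card_add_card] at hle
  lia

/-- The neighbours of `x` that have no other neighbour in `A` can replace `x` in `A`. -/
theorem degIn_onceInto_add_card_le (h : IsFarPair G A B H) (hx : x ∈ A) :
    degIn G (onceInto G A H) x + #A ≤ 9 := by
  have hsub : nbrIn G (onceInto G A H) x ⊆ H := nbrIn_subset.trans onceInto_subset
  have hind : G.IsIndepSet ((nbrIn G (onceInto G A H) x ∪ A.erase x : Finset V) : Set V) := by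
    refine isIndepSet_union (isIndepSet_nbrIn h.cliqueFree _ x)
      (h.isIndepSet_left.mono (erase_subset _ _)) fun w hw a ha hwa => ?_
    obtain ⟨hw, hxw⟩ := mem_nbrIn.1 hw
    exact ne_of_mem_erase ha
      (eq_of_degIn_le_one (mem_onceInto.1 hw).2.le (mem_of_mem_erase ha) hx hwa hxw.symm)
  have hle := h.indepNumLE_left _ (union_subset_union hsub (erase_subset _ _)) hind
  rw [card_union_of_disjoint (h.disjoint_rest_left.mono hsub (erase_subset _ _)), ← degIn] at hle
  have := card_erase_add_one hx
  lia

/-- As in `degIn_onceInto_add_card_le`, with `A ∪ B` in place of `A`. -/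
theorem degIn_onlyInto_le (h : IsFarPair G A B H) (hy : y ∈ B) :
    degIn G (onlyInto G A B H) y ≤ 1 := by
  have hsub : nbrIn G (onlyInto G A B H) y ⊆ H := nbrIn_subset.trans (filter_subset _ _)
  have hind : G.IsIndepSet
      ((nbrIn G (onlyInto G A B H) y ∪ (A ∪ B.erase y) : Finset V) : Set V) := by
    refine isIndepSet_union (isIndepSet_nbrIn h.cliqueFree _ y)
      (isIndepSet_union h.isIndepSet_left (h.isIndepSet_right.mono (erase_subset _ _))
        fun a ha b hb => h.not_adj a ha b (mem_of_mem_erase hb)) fun w hw z hz hwz => ?_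
    obtain ⟨hw, hyw⟩ := mem_nbrIn.1 hw
    obtain ⟨-, hwA, hwB⟩ := mem_onlyInto.1 hw
    rcases mem_union.1 hz with hz | hz
    · exact degIn_eq_zero_iff.1 hwA z hz hwz
    · exact ne_of_mem_erase hz
        (eq_of_degIn_le_one hwB.le (mem_of_mem_erase hz) hy hwz hyw.symm)
  have hsub' : A ∪ B.erase y ⊆ A ∪ B := union_subset_union_right (erase_subset _ _)
  have hle := h.indepNumLE_union _ (union_subset_union hsub hsub') hind
  rw [card_union_of_disjoint (h.disjoint_union.mono hsub hsub'),
    card_union_of_disjoint (h.disjoint.mono_right (erase_subset _ _)), ← degIn] at hle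
  have := card_erase_add_one hy
  have := h.card_add_card
  lia

theorem card_onceInto_le (h : IsFarPair G A B H) : #(onceInto G A H) ≤ #A * #B := by
  rw [← sum_degIn_eq_card fun _ hw => (mem_onceInto.1 hw).2]
  refine sum_le_card_nsmul A _ #B fun x hx => ?_
  have := h.degIn_onceInto_add_card_le hx
  have := h.card_add_card
  lia

theorem card_onlyInto_le (h : IsFarPair G A B H) : #(onlyInto G A B H) ≤ #B := by
  rw [← sum_degIn_eq_card fun _ hw => (mem_onlyInto.1 hw).2.2, card_eq_sum_ones]
  exact sum_le_sum fun y hy => h.degIn_onlyInto_le hy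

theorem le_degSum (h : IsFarPair G A B H) : 198 ≤ degSum G H := by
  have := (tableRow_seven h.cliqueFree H h.indepNumLE).2
  rwa [h.card_eq, edgeTable] at this

theorem degIn_add_one_le (h : IsFarPair G A B H) (hw : w ∈ H) :
    degIn G H w + 1 ≤ (if degIn G A w = 1 then 1 else 0) +
      (if degIn G A w = 0 ∧ degIn G B w = 1 then 1 else 0) + 7 := by
  have := h.indepNumLE.degIn_le h.cliqueFree w
  have := h.degIn_add_degIn_left_le w
  have := h.symm.degIn_add_degIn_left_le w
  have := h.degIn_add_degIn_pos hw
  split_ifs <;> lia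

theorem sum_ite_add (h : IsFarPair G A B H) :
    ∑ w ∈ H, ((if degIn G A w = 1 then 1 else 0) +
      (if degIn G A w = 0 ∧ degIn G B w = 1 then 1 else 0) + 7) =
      #(onceInto G A H) + #(onlyInto G A B H) + 203 := by
  simp [sum_add_distrib, onceInto, onlyInto, h.card_eq]

theorem degSum_add_le (h : IsFarPair G A B H) :
    degSum G H + 29 ≤ #(onceInto G A H) + #(onlyInto G A B H) + 203 := by
  rw [← h.sum_ite_add, ← h.card_eq, card_eq_sum_ones, degSum, ← sum_add_distrib]
  exact sum_le_sum fun w hw => h.degIn_add_one_le hw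

omit [DecidableRel G.Adj] in
theorem le_card_mul_card_add (h : IsFarPair G A B H) : 24 ≤ #A * #B + #B := by
  classical
  have := h.le_degSum
  have := h.degSum_add_le
  have := h.card_onceInto_le
  have := h.card_onlyInto_le
  lia

omit [DecidableRel G.Adj] in
theorem card_eq_five_or (h : IsFarPair G A B H) : #A = 5 ∨ #B = 5 := by
  have hle := h.le_card_mul_card_add
  have hge := h.symm.le_card_mul_card_add
  have hB : #B = 9 - #A := by have := h.card_add_card; lia
  have hA : #A ≤ 9 := by have := h.card_add_card; lia
  rw [hB] at hle hge ⊢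
  generalize #A = a at *
  interval_cases a <;> lia

section Tight

/-! When `#A = 5`, every estimate above is an equality. -/

theorem degSum_eq (h : IsFarPair G A B H) (hA : #A = 5) : degSum G H = 198 := by
  have := h.le_degSum
  have := h.degSum_add_le
  have hle := h.card_onceInto_le
  have := h.card_onlyInto_le
  rw [hA, h.card_right hA] at hle
  have := h.card_right hA
  lia

theorem card_onceInto (h : IsFarPair G A B H) (hA : #A = 5) : #(onceInto G A H) = 20 := by
  have := h.le_degSum
  have := h.degSum_add_le
  have hle := h.card_onceInto_le
  have := h.card_onlyInto_le
  rw [hA, h.card_right hA] at hle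
  have := h.card_right hA
  lia

theorem degIn_cases (h : IsFarPair G A B H) (hA : #A = 5) (hw : w ∈ H) :
    degIn G H w = 7 ∧ (degIn G A w = 1 ∨ degIn G A w = 0 ∧ degIn G B w = 1) ∨
      degIn G H w = 6 ∧ (degIn G A w = 2 ∨ degIn G A w = 0 ∧ 2 ≤ degIn G B w) := by
  have htight : degSum G H + 29 = #(onceInto G A H) + #(onlyInto G A B H) + 203 := by
    have := h.degSum_add_le
    have := h.degSum_eq hA
    have := h.card_onceInto hA
    have := h.card_onlyInto_le
    have := h.card_right hA
    lia
  rw [← h.sum_ite_add, ← h.card_eq, card_eq_sum_ones, degSum, ← sum_add_distrib] at htight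
  have heq := (sum_eq_sum_iff_of_le fun w hw => h.degIn_add_one_le hw).1 htight w hw
  have := h.degIn_add_degIn_left_le w
  have := h.degIn_add_degIn_pos hw
  split_ifs at heq <;> lia

theorem degIn_add_ite (h : IsFarPair G A B H) (hA : #A = 5) (hw : w ∈ H) :
    degIn G H w + (if degIn G H w = 6 then 1 else 0) = 7 := by
  have := h.degIn_cases hA hw
  split_ifs <;> lia

theorem sum_degIn_add_card (h : IsFarPair G A B H) (hA : #A = 5) (hS : S ⊆ H) :
    ∑ w ∈ S, degIn G H w + #{w ∈ S | degIn G H w = 6} = 7 * #S := by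
  rw [card_filter, ← sum_add_distrib, sum_congr rfl fun w hw => h.degIn_add_ite hA (hS hw),
    sum_const, smul_eq_mul, mul_comm]

theorem card_degClass_six (h : IsFarPair G A B H) (hA : #A = 5) : #(degClass G H 6) = 5 := by
  have hsum := h.sum_degIn_add_card hA subset_rfl
  rw [← degSum, h.degSum_eq hA, h.card_eq] at hsum
  rw [degClass]
  lia

theorem sum_degIn_left (h : IsFarPair G A B H) (hA : #A = 5) :
    ∑ x ∈ A, degIn G H x = 20 + 2 * #{w ∈ H | degIn G A w = 2} := by
  rw [sum_degIn_comm, ← h.card_onceInto hA, onceInto, card_filter, card_filter, mul_sum,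
    ← sum_add_distrib]
  refine sum_congr rfl fun w hw => ?_
  have := h.degIn_cases hA hw
  split_ifs <;> lia

theorem degSum_union_left (h : IsFarPair G A B H) (hA : #A = 5) :
    degSum G (H ∪ A) = 238 + 4 * #{w ∈ H | degIn G A w = 2} := by
  rw [degSum_union h.disjoint_rest_left, degSum_eq_zero_of_isIndepSet h.isIndepSet_left,
    h.degSum_eq hA, ← sum_degIn_comm, h.sum_degIn_left hA]
  lia

theorem nbrIn_union_left (h : IsFarPair G A B H) (hx : x ∈ A) :
    nbrIn G (H ∪ A) x = nbrIn G H x := by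
  ext w
  simp only [mem_nbrIn, mem_union]
  refine ⟨fun ⟨hw, hxw⟩ => ⟨hw.resolve_right fun hwA => ?_, hxw⟩, fun ⟨hw, hxw⟩ => ⟨.inl hw, hxw⟩⟩
  exact h.isIndepSet_left hx hwA hxw.ne hxw

theorem nbrDegSum_union_left (h : IsFarPair G A B H) (hA : #A = 5) (hx : x ∈ A) :
    nbrDegSum G (H ∪ A) x = 8 * degIn G H x := by
  rw [nbrDegSum, h.nbrIn_union_left hx, sum_const_nat (m := 8), mul_comm, degIn]
  intro w hw
  obtain ⟨hw, hxw⟩ := mem_nbrIn.1 hw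
  rw [degIn_union h.disjoint_rest_left]
  have := h.degIn_cases hA hw
  have := degIn_pos hx hxw.symm
  lia

theorem six_le_degIn_left (h : IsFarPair G A B H) (hA : #A = 5)
    (hlt : #{w ∈ H | degIn G A w = 2} < 5) (hx : x ∈ A) : 6 ≤ degIn G H x := by
  have hxT : x ∈ H ∪ A := mem_union_right _ hx
  have hcard := card_nonNbrIn (G := G) hxT
  have hdeg := degSum_eq_degSum_nonNbrIn_add h.cliqueFree hxT
  rw [h.degSum_union_left hA, h.nbrDegSum_union_left hA hx] at hdeg
  rw [degIn, h.nbrIn_union_left hx, ← degIn, card_union_of_disjoint h.disjoint_rest_left, h.card_eq,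
    hA] at hcard
  obtain ⟨horder, hedge⟩ :=
    tableRow_seven h.cliqueFree _ (h.indepNumLE_left.nonNbrIn hxT)
  rw [orderTable] at horder
  by_contra! hlt'
  obtain hd | hd : degIn G H x = 4 ∨ degIn G H x = 5 := by lia
  · rw [show #(nonNbrIn G (H ∪ A) x) = 29 by lia, edgeTable] at hedge
    lia
  · rw [show #(nonNbrIn G (H ∪ A) x) = 28 by lia, edgeTable] at hedge
    lia

theorem degIn_left_eq_two (h : IsFarPair G A B H) (hA : #A = 5) (hw : w ∈ degClass G H 6) :
    degIn G A w = 2 := by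
  have hsub : {w ∈ H | degIn G A w = 2} ⊆ degClass G H 6 := by
    intro w hw
    obtain ⟨hw, hw2⟩ := mem_filter.1 hw
    have := h.degIn_cases hA hw
    exact mem_degClass.2 ⟨hw, by lia⟩
  have hcard : 5 ≤ #{w ∈ H | degIn G A w = 2} := by
    by_contra! hlt
    have hsum := card_nsmul_le_sum A _ 6 fun x hx => h.six_le_degIn_left hA hlt hx
    rw [h.sum_degIn_left hA, hA, smul_eq_mul] at hsum
    lia
  rw [← eq_of_subset_of_card_le hsub (by rwa [h.card_degClass_six hA])] at hw
  exact (mem_filter.1 hw).2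

theorem degIn_right_le_one (h : IsFarPair G A B H) (hA : #A = 5) (hw : w ∈ H) :
    degIn G B w ≤ 1 := by
  have := h.degIn_cases hA hw
  have := h.degIn_add_degIn_add_degIn_le w
  have hsix : degIn G H w = 6 → degIn G A w = 2 := fun h6 =>
    h.degIn_left_eq_two hA (mem_degClass.2 ⟨hw, h6⟩)
  lia

theorem card_sdiff_add_card (h : IsFarPair G A B H) (hA : #A = 5) :
    #(H \ onceInto G B H) + #{w ∈ onceInto G B H | degIn G H w = 6} ≤ 10 := by
  have hsub : H \ onceInto G B H ⊆
      onlyInto G B A H ∪ (degClass G H 6 \ {w ∈ onceInto G B H | degIn G H w = 6}) := by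
    intro w hw
    simp only [mem_sdiff, mem_onceInto, mem_union, mem_onlyInto, mem_degClass, mem_filter] at hw ⊢
    have := h.degIn_right_le_one hA hw.1
    have := h.degIn_cases hA hw.1
    grind
  have hsub6 : {w ∈ onceInto G B H | degIn G H w = 6} ⊆ degClass G H 6 :=
    filter_subset_filter _ onceInto_subset
  have hle := (card_le_card hsub).trans (card_union_le _ _)
  have := h.symm.card_onlyInto_le
  have := card_sdiff_add_card_eq_card hsub6
  rw [h.card_degClass_six hA] at this
  lia

theorem card_sdiff_add_card_onceInto (h : IsFarPair G A B H) :
    #(H \ onceInto G B H) + #(onceInto G B H) = 29 := by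
  rw [card_sdiff_add_card_eq_card onceInto_subset, h.card_eq]

theorem card_onceInto_right (h : IsFarPair G A B H) (hA : #A = 5) : #(onceInto G B H) ≤ 20 := by
  have hle := h.symm.card_onceInto_le
  rwa [hA, h.card_right hA] at hle

theorem degIn_onceInto_right_le (h : IsFarPair G A B H) (hA : #A = 5) (hy : y ∈ B) :
    degIn G (onceInto G B H) y ≤ 5 := by
  have := h.symm.degIn_onceInto_add_card_le hy
  have := h.card_right hA
  lia

theorem nine_le_degIn_add_degIn (h : IsFarPair G A B H) (hA : #A = 5) (hy : y ∈ B) (hy' : y' ∈ B)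
    (hne : y ≠ y') :
    9 ≤ degIn G (onceInto G B H) y + degIn G (onceInto G B H) y' := by
  have hsub : {y, y'} ⊆ B := insert_subset hy (singleton_subset_iff.2 hy')
  have hsum := sum_degIn_eq_card (G := G) fun w (hw : w ∈ onceInto G B H) => (mem_onceInto.1 hw).2
  rw [← sum_sdiff hsub, sum_pair hne] at hsum
  have hrest := sum_le_card_nsmul (B \ {y, y'}) _ 5 fun z hz =>
    h.degIn_onceInto_right_le hA (mem_sdiff.1 hz).1
  rw [card_sdiff_of_subset hsub, card_pair hne, h.card_right hA, smul_eq_mul] at hrest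
  have := h.card_sdiff_add_card hA
  have := h.card_sdiff_add_card_onceInto
  lia

theorem mem_nbrIn_onceInto (h : IsFarPair G A B H) (hA : #A = 5) (hy : y ∈ B) (hw : w ∈ H)
    (hyw : G.Adj y w) : w ∈ nbrIn G (onceInto G B H) y := by
  have := h.degIn_right_le_one hA hw
  have := degIn_pos hy hyw.symm
  exact mem_nbrIn.2 ⟨mem_onceInto.2 ⟨hw, by lia⟩, hyw⟩

/-- `H ∪ B` without the pair `{y, y'}` and its neighbours. -/
def pairRest (G : SimpleGraph V) [DecidableRel G.Adj] (B H : Finset V) (y y' : V) : Finset V :=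
  (H \ (nbrIn G (onceInto G B H) y ∪ nbrIn G (onceInto G B H) y')) ∪ (B \ {y, y'})

theorem indepNumLE_pairRest (h : IsFarPair G A B H) (hA : #A = 5) (hy : y ∈ B) (hy' : y' ∈ B)
    (hne : y ≠ y') : IndepNumLE G (pairRest G B H y y') 6 := by
  have hsub : {y, y'} ⊆ B := insert_subset hy (singleton_subset_iff.2 hy')
  refine IndepNumLE.of_union (J := {y, y'}) ?_ (h.isIndepSet_right.mono (mod_cast hsub)) ?_ ?_
  · rw [card_pair hne]
    refine h.indepNumLE_right.mono (union_subset (hsub.trans subset_union_right) ?_)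
    exact union_subset_union sdiff_subset sdiff_subset
  · exact disjoint_union_right.2
      ⟨(h.disjoint_rest_right.mono sdiff_subset hsub).symm, disjoint_sdiff⟩
  · intro z hz w hw hzw
    rcases mem_union.1 hw with hw | hw
    · obtain ⟨hw, hnot⟩ := mem_sdiff.1 hw
      have := h.mem_nbrIn_onceInto hA (hsub hz) hw hzw
      simp only [mem_insert, mem_singleton] at hz
      rcases hz with rfl | rfl
      exacts [hnot (mem_union_left _ this), hnot (mem_union_right _ this)]
    · exact h.isIndepSet_right (hsub hz) (mem_sdiff.1 hw).1 hzw.ne hzw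

theorem card_pairRest (h : IsFarPair G A B H) (hA : #A = 5) (hy : y ∈ B) (hy' : y' ∈ B)
    (hne : y ≠ y') :
    #(pairRest G B H y y') + (degIn G (onceInto G B H) y + degIn G (onceInto G B H) y') = 31 := by
  have hsub : {y, y'} ⊆ B := insert_subset hy (singleton_subset_iff.2 hy')
  have hcard := card_sdiff_add_card_eq_card
    ((union_subset nbrIn_subset nbrIn_subset).trans onceInto_subset :
      nbrIn G (onceInto G B H) y ∪ nbrIn G (onceInto G B H) y' ⊆ H)
  rw [card_nbrIn_union hy hy' hne, h.card_eq] at hcard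
  rw [pairRest, card_union_of_disjoint (h.disjoint_rest_right.mono sdiff_subset sdiff_subset),
    card_sdiff_of_subset hsub, card_pair hne, h.card_right hA]
  lia

theorem sum_degIn_right (h : IsFarPair G A B H) (hA : #A = 5) :
    ∑ w ∈ H, degIn G B w = #(onceInto G B H) := by
  rw [onceInto, card_filter]
  refine sum_congr rfl fun w hw => ?_
  have := h.degIn_right_le_one hA hw
  split_ifs <;> lia

theorem degSum_sdiff_union_add_le (h : IsFarPair G A B H) (hA : #A = 5)
    (hS : S ⊆ onceInto G B H) (hT : T ⊆ B) :
    degSum G (H \ S ∪ T) + 2 * ∑ w ∈ S, degIn G H w + 2 * #S ≤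
      198 + degSum G S + 2 * #(onceInto G B H) := by
  have hSH := hS.trans onceInto_subset
  have hle : ∑ w ∈ H \ S, degIn G T w ≤ ∑ w ∈ H \ S, degIn G B w :=
    sum_le_sum fun w _ => degIn_mono hT w
  have hcross := sum_sdiff (f := degIn G B) hSH
  rw [h.sum_degIn_right hA, sum_congr rfl fun w hw => (mem_onceInto.1 (hS hw)).2,
    ← card_eq_sum_ones] at hcross
  have hsplit := degSum_add_degSum (G := G) hSH
  rw [h.degSum_eq hA] at hsplit
  rw [degSum_union (h.disjoint_rest_right.mono sdiff_subset hT),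
    degSum_eq_zero_of_isIndepSet (S := T) (h.isIndepSet_right.mono (mod_cast hT))]
  lia

/-- Removing `y`, `y'` and their neighbours from `H ∪ B` leaves a set of independence number at
most `6`, and the edges that this set must have are missing only if the neighbourhoods of `y` and
`y'` are joined by many edges. -/
theorem ten_le_sum_degIn_nbrIn (h : IsFarPair G A B H) (hA : #A = 5) (hy : y ∈ B) (hy' : y' ∈ B)
    (hne : y ≠ y') :
    10 ≤ ∑ w ∈ nbrIn G (onceInto G B H) y, degIn G (nbrIn G (onceInto G B H) y') w := by
  set P := nbrIn G (onceInto G B H) y ∪ nbrIn G (onceInto G B H) y' with hP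
  have hsub : P ⊆ onceInto G B H := union_subset nbrIn_subset nbrIn_subset
  have hPsum := degSum_union (G := G)
    (disjoint_nbrIn_onceInto (G := G) (H := H) hy hy' hne)
  rw [← hP, degSum_eq_zero_of_isIndepSet (isIndepSet_nbrIn h.cliqueFree _ y),
    degSum_eq_zero_of_isIndepSet (isIndepSet_nbrIn h.cliqueFree _ y')] at hPsum
  have hrest : degSum G (pairRest G B H y y') + 2 * ∑ w ∈ P, degIn G H w + 2 * #P ≤
      198 + degSum G P + 2 * #(onceInto G B H) :=
    h.degSum_sdiff_union_add_le hA hsub sdiff_subset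
  have hdeg := h.sum_degIn_add_card hA (hsub.trans onceInto_subset)
  have hsix : #{w ∈ P | degIn G H w = 6} ≤ #{w ∈ onceInto G B H | degIn G H w = 6} :=
    card_le_card (filter_subset_filter _ hsub)
  have hPcard : #P = _ := card_nbrIn_union (G := G) (H := H) hy hy' hne
  have hcard := h.card_pairRest hA hy hy' hne
  have hedge := (tableRow_six h.cliqueFree _ (h.indepNumLE_pairRest hA hy hy' hne)).2
  have := h.card_onceInto_right hA
  have := h.card_sdiff_add_card hA
  have := h.card_sdiff_add_card_onceInto
  have := h.nine_le_degIn_add_degIn hA hy hy' hne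
  have := h.degIn_onceInto_right_le hA hy
  have := h.degIn_onceInto_right_le hA hy'
  obtain hr | hr : #(pairRest G B H y y') = 21 ∨ #(pairRest G B H y y') = 22 := by lia
  all_goals
    rw [hr, edgeTable] at hedge
    lia

theorem degSum_onceInto_right (h : IsFarPair G A B H) (hA : #A = 5) :
    120 ≤ degSum G (onceInto G B H) := by
  rw [degSum_eq_sum_sum_degIn_nbrIn (T := B) fun w hw => (mem_onceInto.1 hw).2]
  have hB := h.card_right hA
  have hrow : ∀ y ∈ B, 30 ≤ ∑ y' ∈ B,
      ∑ w ∈ nbrIn G (onceInto G B H) y, degIn G (nbrIn G (onceInto G B H) y') w := by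
    intro y hy
    have hle := card_nsmul_le_sum (B.erase y) _ 10 fun y' hy' =>
      h.ten_le_sum_degIn_nbrIn hA hy (mem_of_mem_erase hy') (ne_of_mem_erase hy').symm
    rw [card_erase_of_mem hy, hB] at hle
    exact hle.trans (sum_le_sum_of_subset (erase_subset _ _))
  have hle := card_nsmul_le_sum B _ 30 hrow
  rwa [hB] at hle

theorem indepNumLE_sdiff_onceInto (h : IsFarPair G A B H) (hA : #A = 5) :
    IndepNumLE G (H \ onceInto G B H) 4 := by
  refine IndepNumLE.of_union (J := B) ?_ h.isIndepSet_right
    (h.disjoint_rest_right.symm.mono_right sdiff_subset) fun y hy w hw hyw => ?_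
  · rw [h.card_right hA, union_comm]
    exact h.indepNumLE_right.mono (union_subset_union_left sdiff_subset)
  · obtain ⟨hw, hnot⟩ := mem_sdiff.1 hw
    exact hnot (nbrIn_subset (h.mem_nbrIn_onceInto hA hy hw hyw))

omit [DecidableRel G.Adj] in
theorem card_left_ne_five (h : IsFarPair G A B H) : #A ≠ 5 := by
  classical
  intro hA
  have hsplit := degSum_add_degSum (G := G) (sdiff_subset (s := H) (t := onceInto G B H))
  rw [Finset.sdiff_sdiff_eq_self onceInto_subset, h.degSum_eq hA] at hsplit
  have hdeg := h.sum_degIn_add_card hA (sdiff_subset (s := H) (t := onceInto G B H))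
  have hsix : #{w ∈ H \ onceInto G B H | degIn G H w = 6} ≤ 5 := by
    rw [← h.card_degClass_six hA]
    exact card_le_card (filter_subset_filter _ sdiff_subset)
  have hinner : degSum G (H \ onceInto G B H) ≤ #(H \ onceInto G B H) • 4 :=
    sum_le_card_nsmul _ _ _ fun w _ =>
      (h.indepNumLE_sdiff_onceInto hA).degIn_le h.cliqueFree w
  have houter := h.degSum_onceInto_right hA
  have := h.card_onceInto_right hA
  have := h.card_sdiff_add_card_onceInto
  rw [smul_eq_mul] at hinner
  lia

end Tight

omit [DecidableRel G.Adj] in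
theorem false (h : IsFarPair G A B H) : False := by
  rcases h.card_eq_five_or with hA | hB
  exacts [h.card_left_ne_five hA, h.symm.card_left_ne_five hB]

end IsFarPair

end FarPair

section Diameter

variable {V : Type*} [Fintype V] {G : SimpleGraph V} {u v : V}

theorem IndepNumLE.univ_of_cliqueFree_compl {k : ℕ} (h : Gᶜ.CliqueFree (k + 1)) :
    IndepNumLE G univ k := by
  intro I _ hI
  by_contra! hk
  obtain ⟨J, hJI, hJ⟩ := exists_subset_card_eq (Nat.succ_le_of_lt hk)
  exact (SimpleGraph.cliqueFree_compl G).1 h J ⟨hI.mono (coe_subset.2 hJI), hJ⟩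

theorem isFarPair_nbrIn [DecidableEq V] [DecidableRel G.Adj] (hG : G.CliqueFree 3)
    (hα : IndepNumLE G univ 9) (hV : 40 ≤ Fintype.card V) (hne : u ≠ v) (huv : ¬G.Adj u v)
    (hdisj : Disjoint (nbrIn G univ u) (nbrIn G univ v))
    (hnadj : ∀ a ∈ nbrIn G univ u, ∀ b ∈ nbrIn G univ v, ¬G.Adj a b) :
    IsFarPair G (nbrIn G univ u) (nbrIn G univ v) (nonNbrIn G (nonNbrIn G univ u) v) := by
  have hv : v ∈ nonNbrIn G univ u := by simp [hne.symm, huv]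
  have hαu := hα.nonNbrIn (mem_univ u)
  have hαH := hαu.nonNbrIn hv
  have hle : #(nbrIn G univ u) + #(nbrIn G univ v) ≤ 9 := by
    rw [← card_union_of_disjoint hdisj]
    exact hα _ (subset_univ _)
      (isIndepSet_union (isIndepSet_nbrIn hG _ _) (isIndepSet_nbrIn hG _ _) hnadj)
  have hH : #(nonNbrIn G (nonNbrIn G univ u) v) ≤ 29 := (tableRow_seven hG _ hαH).1
  have hcard : Fintype.card V ≤ #(nonNbrIn G (nonNbrIn G univ u) v) + #(nbrIn G univ u) +
      #(nbrIn G univ v) + 2 := by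
    have hu := card_nonNbrIn (G := G) (mem_univ u)
    have hv := card_nonNbrIn (G := G) hv
    have hmono : degIn G (nonNbrIn G univ u) v ≤ degIn G univ v := degIn_mono (subset_univ _) v
    rw [card_univ] at hu
    simp only [degIn] at hu hv hmono
    lia
  have hvu : ¬G.Adj v u := fun h => huv h.symm
  have hsep : ∀ x, G.Adj u x → ¬G.Adj v x := by simpa [disjoint_left] using hdisj
  refine ⟨hG, isIndepSet_nbrIn hG _ _, isIndepSet_nbrIn hG _ _, hnadj, hdisj, ?_, ?_,
    hα.mono (subset_univ _), (hα.nonNbrIn (mem_univ v)).mono ?_, hαu.mono ?_, hαH,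
    by lia, by lia⟩
  all_goals
    simp only [disjoint_left, subset_iff, mem_union, mem_nonNbrIn, mem_nbrIn]
    grind

theorem edist_le_three (hG : G.CliqueFree 3) (hα : IndepNumLE G univ 9)
    (hV : 40 ≤ Fintype.card V) (u v : V) : G.edist u v ≤ 3 := by
  classical
  by_contra! hd
  have hlt {n : ℕ} (p : G.Walk u v) (hp : p.length = n) : 3 < n := by
    have h := hd.trans_le (SimpleGraph.Walk.edist_le p)
    rw [hp] at h
    exact_mod_cast h
  have hne : u ≠ v := by
    rintro rfl
    simp at hd
  have huv : ¬G.Adj u v := fun h => by simpa using hlt (.cons h .nil) rfl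
  refine (isFarPair_nbrIn hG hα hV hne huv ?_ ?_).false
  · rw [disjoint_left]
    intro w hu hv
    simp only [mem_nbrIn, mem_univ, true_and] at hu hv
    simpa using hlt (.cons hu (.cons hv.symm .nil)) rfl
  · intro a ha b hb hab
    simp only [mem_nbrIn, mem_univ, true_and] at ha hb
    simpa using hlt (.cons ha (.cons hab (.cons hb.symm .nil))) rfl

end Diameter

end TriangleRamsey

theorem stmt_13_general {V : Type*} [Fintype V] (G : SimpleGraph V) (hV : 40 ≤ Fintype.card V)
    (h3 : G.CliqueFree 3) (h10 : Gᶜ.CliqueFree 10) : 2 ≤ G.diam ∧ G.diam ≤ 3 := by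
  have hle : G.ediam ≤ 3 := SimpleGraph.ediam_le_of_edist_le
    (TriangleRamsey.edist_le_three h3 (.univ_of_cliqueFree_compl h10) hV)
  have hfin : G.ediam ≠ ⊤ := fun h => by simp [h] at hle
  refine ⟨?_, ENat.toNat_le_of_le_natCast hle⟩
  have : Nontrivial V := Fintype.one_lt_card_iff_nontrivial.1 (by lia)
  have hzero : G.diam ≠ 0 := SimpleGraph.diam_ne_zero_of_ediam_ne_top hfin
  have hone : G.diam ≠ 1 := by
    rw [Ne, SimpleGraph.diam_eq_one]
    rintro rfl
    obtain ⟨x, y, z, hxy, hxz, hyz⟩ := Fintype.two_lt_card_iff.1 (show 2 < Fintype.card V by lia)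
    exact TriangleRamsey.not_adj_of_cliqueFree_three h3 hxy hxz hyz
  lia

/-- The diameter of a (3,10,40)-graph is 2 or 3. -/
theorem stmt_13 (Ω : SimpleGraph (Fin 40)) [DecidableRel Ω.Adj]
    (h3 : Ω.CliqueFree 3) (h10 : Ωᶜ.CliqueFree 10) :
    2 ≤ Ω.diam ∧ Ω.diam ≤ 3 :=
  stmt_13_general Ω (by simp) h3 h10
end

section
/- Let Ω be a (3,10,40)-graph with diam(Ω) = 2 and let v be a vertex of Ω with d(v) = 6. Then the neighbourhood N(v) contains at most 2 vertices of degree 6. -/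
/-!
Let `Ω` be triangle-free with independence number `α`, and let `S ⊆ N(v)`. The neighbours of a
vertex `u` that lie outside `N(v)` and have no neighbour in `S` form, together with `S`, an
independent set, so there are at most `α - |S|` of them. Adding the vertices of `N(v) \ S` to `S`
one at a time, and using that every vertex is within distance two of `v`, the vertices missed by
`S` number at most `∑ i ∈ [|S|, d(v)), (α - i)`.

If `α ≤ 9`, `d(v) ≤ 6` and `S` consists of three vertices of degree at most 6, then `v`, `N(v)`
and the neighbours of `S` make up at most `1 + 6 + 3 * 5 = 22` vertices, while at most
`6 + 5 + 4 = 15` vertices are missed; so there are at most 37 vertices in total.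
-/

open Finset

section

variable {V : Type*} {G : SimpleGraph V} {v : V} {S : Finset V}

theorem indepNum_lt_of_indepSetFree [Finite V] {n : ℕ} (h : G.IndepSetFree n) :
    G.indepNum < n := by
  by_contra! hn
  obtain ⟨s, hs⟩ := G.exists_isNIndepSet_indepNum
  rw [← SimpleGraph.cliqueFree_compl] at h
  exact h.mono hn s ((SimpleGraph.isNClique_compl G).mpr hs)

variable [Fintype V] [DecidableEq V] [DecidableRel G.Adj]

variable (G v S) in
/-- The vertices missed by `S` as seen from `v`: those outside the closed neighbourhood of `v`
that are not adjacent to any vertex of `S`. It is meant for `S ⊆ N(v)`, when they are the vertices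
at distance at least two from `v` which `S` does not dominate. -/
def missedFinset : Finset V :=
  {x | x ≠ v ∧ ¬ G.Adj v x ∧ ∀ u ∈ S, ¬ G.Adj u x}

theorem mem_missedFinset {x : V} :
    x ∈ missedFinset G v S ↔ x ≠ v ∧ ¬ G.Adj v x ∧ ∀ u ∈ S, ¬ G.Adj u x := by
  simp [missedFinset]

theorem card_missedFinset_empty_add :
    #(missedFinset G v ∅) + (G.degree v + 1) = Fintype.card V := by
  have hcompl : missedFinset G v ∅ = (insert v (G.neighborFinset v))ᶜ := by
    ext x
    simp [mem_missedFinset]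
  rw [hcompl, ← G.card_neighborFinset_eq_degree,
    ← card_insert_of_notMem (G.notMem_neighborFinset_self v), card_compl_add_card]

theorem missedFinset_neighborFinset_eq_empty (hecc : G.eccent v ≤ 2) :
    missedFinset G v (G.neighborFinset v) = ∅ := by
  refine eq_empty_of_forall_notMem fun x hx ↦ ?_
  obtain ⟨hne, hvx, hmiss⟩ := mem_missedFinset.mp hx
  have hcommon : G.commonNeighbors v x = ∅ := Set.eq_empty_of_forall_notMem fun u hu ↦
    hmiss u (by simpa using hu.1) hu.2.symm
  exact (SimpleGraph.edist_le_eccent.trans hecc).not_gt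
    (SimpleGraph.two_lt_edist_iff.mpr ⟨hne.symm, hvx, hcommon⟩)

variable (G v S) in
theorem card_missedFinset_insert_add (u : V) :
    #(missedFinset G v (insert u S)) + #{x ∈ missedFinset G v S | G.Adj u x} =
      #(missedFinset G v S) := by
  have hfilter : missedFinset G v (insert u S) = {x ∈ missedFinset G v S | ¬ G.Adj u x} := by
    ext x
    simp only [mem_missedFinset, mem_filter, forall_mem_insert]
    tauto
  rw [hfilter, add_comm, card_filter_add_card_filter_not]

theorem card_filter_adj_missedFinset_le_degree_sub_one {u : V} (hu : G.Adj v u) :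
    #{x ∈ missedFinset G v S | G.Adj u x} ≤ G.degree u - 1 := by
  have hv : v ∈ G.neighborFinset u := by simpa using hu.symm
  rw [← G.card_neighborFinset_eq_degree, ← card_erase_of_mem hv]
  refine card_le_card fun x hx ↦ ?_
  obtain ⟨hmissed, hux⟩ := mem_filter.mp hx
  simpa using And.intro (mem_missedFinset.mp hmissed).1 hux

theorem card_missedFinset_empty_le (hS : S ⊆ G.neighborFinset v) :
    #(missedFinset G v ∅) ≤ #(missedFinset G v S) + ∑ u ∈ S, (G.degree u - 1) := by
  induction S using Finset.induction_on with
  | empty => simp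
  | insert u S hu ih =>
    obtain ⟨huv, hSv⟩ := insert_subset_iff.mp hS
    have hdegree := card_filter_adj_missedFinset_le_degree_sub_one (S := S)
      ((G.mem_neighborFinset v u).mp huv)
    have hsplit := card_missedFinset_insert_add G v S u
    have hbound := ih hSv
    rw [sum_insert hu]
    omega

theorem card_filter_adj_missedFinset_add_le_indepNum (h3 : G.CliqueFree 3)
    (hS : S ⊆ G.neighborFinset v) (u : V) :
    #{x ∈ missedFinset G v S | G.Adj u x} + #S ≤ G.indepNum := by
  set W : Finset V := {x ∈ missedFinset G v S | G.Adj u x}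
  have hWmissed : ∀ x ∈ W, x ∈ missedFinset G v S := fun x hx ↦ (mem_filter.mp hx).1
  have hdisj : Disjoint W S := disjoint_left.mpr fun x hxW hxS ↦
    (mem_missedFinset.mp (hWmissed x hxW)).2.1 (by simpa using hS hxS)
  have hWindep : G.IsIndepSet (W : Set V) :=
    (SimpleGraph.isIndepSet_neighborSet_of_triangleFree G h3 u).mono
      fun x hx ↦ (mem_filter.mp hx).2
  have hSindep : G.IsIndepSet (S : Set V) :=
    (SimpleGraph.isIndepSet_neighborSet_of_triangleFree G h3 v).mono
      fun x hx ↦ by simpa using hS hx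
  have hindep : G.IsIndepSet (W ∪ S : Finset V) := by
    have : Std.Symm fun x y ↦ ¬ G.Adj x y := ⟨fun _ _ h h' ↦ h h'.symm⟩
    rw [coe_union, SimpleGraph.IsIndepSet, Set.pairwise_union_of_symm]
    exact ⟨hWindep, hSindep, fun x hx y hy _ hxy ↦
      (mem_missedFinset.mp (hWmissed x hx)).2.2 y hy hxy.symm⟩
  rw [← card_union_of_disjoint hdisj]
  exact hindep.card_le_indepNum

theorem card_missedFinset_le_sum {S : Finset V} (h3 : G.CliqueFree 3) (hecc : G.eccent v ≤ 2)
    (hS : S ⊆ G.neighborFinset v) :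
    #(missedFinset G v S) ≤ ∑ i ∈ Ico #S (G.degree v), (G.indepNum - i) := by
  rcases hS.eq_or_ssubset with rfl | hssub
  · simp [missedFinset_neighborFinset_eq_empty hecc]
  · obtain ⟨u, huv, huS⟩ := exists_of_ssubset hssub
    have hcard : #S < G.degree v := G.card_neighborFinset_eq_degree v ▸ card_lt_card hssub
    have hinsert := card_missedFinset_le_sum h3 hecc (insert_subset huv hS)
    have hnew := card_filter_adj_missedFinset_add_le_indepNum h3 hS u
    have hsplit := card_missedFinset_insert_add G v S u
    rw [card_insert_of_notMem huS] at hinsert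
    rw [sum_eq_sum_Ico_succ_bot hcard]
    omega
termination_by G.degree v - #S
decreasing_by
  rw [card_insert_of_notMem huS]
  omega

end

/-- Neither subtraction truncates: each `u ∈ S` is adjacent to `v`, and `N(v)` is independent, so
`i < d(v) ≤ α`. -/
theorem card_le_of_eccent_le_two {V : Type*} [Fintype V] {G : SimpleGraph V} [DecidableRel G.Adj]
    {v : V} {S : Finset V} (h3 : G.CliqueFree 3) (hecc : G.eccent v ≤ 2)
    (hS : S ⊆ G.neighborFinset v) :
    Fintype.card V ≤ 1 + G.degree v + ∑ u ∈ S, (G.degree u - 1) +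
      ∑ i ∈ Ico #S (G.degree v), (G.indepNum - i) := by
  classical
  have htotal := card_missedFinset_empty_add (G := G) (v := v)
  have hS_bound := card_missedFinset_empty_le hS
  have hmissed := card_missedFinset_le_sum h3 hecc hS
  omega

theorem stmt_14_general {V : Type*} [Fintype V] {Ω : SimpleGraph V} [DecidableRel Ω.Adj]
    (h3 : Ω.CliqueFree 3) (h10 : Ωᶜ.CliqueFree 10) (hV : 38 ≤ Fintype.card V) {v : V}
    (hecc : Ω.eccent v ≤ 2) (hv : Ω.degree v ≤ 6) :
    #{u ∈ Ω.neighborFinset v | Ω.degree u ≤ 6} ≤ 2 := by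
  classical
  by_contra! hthree
  obtain ⟨S, hS, hScard⟩ := exists_subset_card_eq (Nat.succ_le_of_lt hthree)
  have hSv : S ⊆ Ω.neighborFinset v := hS.trans (filter_subset _ _)
  have hdegree : ∑ u ∈ S, (Ω.degree u - 1) ≤ 15 := by
    refine (sum_le_card_nsmul S _ 5 fun u hu ↦ ?_).trans_eq (by simp [hScard])
    exact Nat.sub_le_sub_right (mem_filter.mp (hS hu)).2 1
  have hα : Ω.indepNum ≤ 9 :=
    Nat.le_of_lt_succ (indepNum_lt_of_indepSetFree ((SimpleGraph.cliqueFree_compl Ω).mp h10))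
  have hmissed : ∑ i ∈ Ico #S (Ω.degree v), (Ω.indepNum - i) ≤ 15 := calc
    _ ≤ ∑ i ∈ Ico 3 6, (Ω.indepNum - i) := sum_le_sum_of_subset (Ico_subset_Ico hScard.ge hv)
    _ ≤ ∑ i ∈ Ico 3 6, (9 - i) := sum_le_sum fun i _ ↦ Nat.sub_le_sub_right hα i
    _ = 15 := by decide
  have hcard := card_le_of_eccent_le_two h3 hecc hSv
  omega

/-- In a (3,10,40)-graph of diameter 2, the neighbourhood of a vertex of
degree 6 contains at most 2 vertices of degree 6. -/
theorem stmt_14 (Ω : SimpleGraph (Fin 40)) [DecidableRel Ω.Adj]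
    (h3 : Ω.CliqueFree 3) (h10 : Ωᶜ.CliqueFree 10)
    (hdiam : Ω.diam = 2) (v : Fin 40) (hv : Ω.degree v = 6) :
    ((Ω.neighborFinset v).filter fun u => Ω.degree u = 6).card ≤ 2 := by
  have hediam : Ω.ediam = 2 := (ENat.toNat_eq_iff two_ne_zero).mp hdiam
  exact (card_le_card (monotone_filter_right _ fun _ _ h ↦ h.le)).trans
    (stmt_14_general h3 h10 (by simp) (hediam ▸ SimpleGraph.eccent_le_ediam) hv.le)
end

section
/- Let Ω be a (3,10,40)-graph with diam(Ω) = 2. Then the minimum degree of Ω is at least 6, i.e., every vertex of Ω has degree at least 6. -/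
/-!
Let `G` be triangle-free of diameter at most two, with `n` vertices and independence number `α`, and
let `v` have degree `d`. Each of the `n - 1 - d` non-neighbors `w ≠ v` of `v` has at least one
neighbor in `N(v)`, so `2 * (n - 1 - d)` is at most the number of edges between `N(v)` and these `w`
plus the number of `w` with exactly one neighbor in `N(v)`. Neighborhoods are independent, so the
first term is at most `d * (α - 1)`. If `P` is the set of vertices whose only neighbor in `N(v)` is
`u`, then `P ∪ (N(v) \ {u})` is independent, so the second term is at most `d * (α + 1 - d)`.
Altogether `2 * (n - 1 - d) ≤ d * (2 * α - d)`, which fails for `n = 40`, `α ≤ 9`, `d ≤ 5`.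
-/

open Finset

theorem two_mul_card_le_sum_add_card_filter_eq_one {ι : Type*} {s : Finset ι} {f : ι → ℕ}
    (hf : ∀ i ∈ s, 1 ≤ f i) : 2 * #s ≤ ∑ i ∈ s, f i + #{i ∈ s | f i = 1} := by
  rw [card_filter, ← sum_add_distrib, mul_comm, ← smul_eq_mul]
  refine card_nsmul_le_sum _ _ _ fun i hi ↦ ?_
  have := hf i hi
  split_ifs <;> omega

variable {V : Type*} {G : SimpleGraph V}

theorem exists_adj_adj_of_ediam_le_two (hdiam : G.ediam ≤ 2) {v w : V} (hne : v ≠ w)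
    (hadj : ¬G.Adj v w) : ∃ u, G.Adj v u ∧ G.Adj w u := by
  by_contra! h
  have no_common : G.commonNeighbors v w = ∅ :=
    Set.eq_empty_of_forall_notMem fun u hu ↦ h u hu.1 hu.2
  exact (SimpleGraph.edist_le_ediam.trans hdiam).not_gt <|
    SimpleGraph.two_lt_edist_iff.2 ⟨hne, hadj, no_common⟩

theorem indepNum_lt_of_compl_cliqueFree {n : ℕ} (h : Gᶜ.CliqueFree n) : G.indepNum < n := by
  by_contra! hn
  obtain ⟨s, hs⟩ := Gᶜ.exists_isNClique_cliqueNum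
  exact h.mono (hn.trans_eq SimpleGraph.cliqueNum_compl.symm) s hs

variable [Fintype V] [DecidableRel G.Adj]

theorem isIndepSet_neighborFinset (h3 : G.CliqueFree 3) (v : V) :
    G.IsIndepSet (G.neighborFinset v : Set V) := by
  simpa only [SimpleGraph.coe_neighborFinset] using
    SimpleGraph.isIndepSet_neighborSet_of_triangleFree G h3 v

theorem degree_le_indepNum (h3 : G.CliqueFree 3) (v : V) : G.degree v ≤ G.indepNum :=
  (isIndepSet_neighborFinset h3 v).card_le_indepNum

theorem sum_card_filter_adj (S : Finset V) :
    ∑ w, #{x ∈ S | G.Adj x w} = ∑ x ∈ S, G.degree x := by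
  simp only [← SimpleGraph.card_neighborFinset_eq_degree, SimpleGraph.neighborFinset_eq_filter]
  exact (sum_card_bipartiteAbove_eq_sum_card_bipartiteBelow G.Adj).symm

section PrivateNeighbors

variable [DecidableEq V]

variable (G) in
/-- The private neighbors of `u` with respect to `S`: the vertices, in `S` or not, whose only
neighbor in `S` is `u`. -/
def privateNeighborFinset (S : Finset V) (u : V) : Finset V :=
  {w | {x ∈ S | G.Adj x w} = {u}}

variable {S : Finset V} {u w : V}

theorem mem_privateNeighborFinset :
    w ∈ privateNeighborFinset G S u ↔ {x ∈ S | G.Adj x w} = ({u} : Finset V) := by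
  simp only [privateNeighborFinset, mem_filter_univ]

theorem mem_and_adj_iff_of_mem_privateNeighborFinset (hw : w ∈ privateNeighborFinset G S u)
    (x : V) : x ∈ S ∧ G.Adj x w ↔ x = u := by
  rw [← mem_filter (p := (G.Adj · w)), mem_privateNeighborFinset.1 hw, mem_singleton]

theorem adj_of_mem_privateNeighborFinset (hw : w ∈ privateNeighborFinset G S u) : G.Adj u w :=
  ((mem_and_adj_iff_of_mem_privateNeighborFinset hw u).2 rfl).2

theorem isIndepSet_privateNeighborFinset_union_erase (h3 : G.CliqueFree 3)
    (hS : G.IsIndepSet (S : Set V)) :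
    G.IsIndepSet (privateNeighborFinset G S u ∪ S.erase u : Finset V) := by
  have not_adj_private : ∀ x ∈ S.erase u, ∀ w ∈ privateNeighborFinset G S u, ¬G.Adj x w :=
    fun x hx w hw hxw ↦ ne_of_mem_erase hx <|
      (mem_and_adj_iff_of_mem_privateNeighborFinset hw x).1 ⟨mem_of_mem_erase hx, hxw⟩
  intro a ha b hb hab
  rcases mem_union.1 ha with ha | ha <;> rcases mem_union.1 hb with hb | hb
  · exact SimpleGraph.isIndepSet_neighborSet_of_triangleFree G h3 u
      (adj_of_mem_privateNeighborFinset ha) (adj_of_mem_privateNeighborFinset hb) hab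
  · exact fun h ↦ not_adj_private b hb a ha h.symm
  · exact not_adj_private a ha b hb
  · exact hS (mem_of_mem_erase ha) (mem_of_mem_erase hb) hab

theorem disjoint_privateNeighborFinset (hS : G.IsIndepSet (S : Set V)) :
    Disjoint (privateNeighborFinset G S u) S := by
  refine disjoint_left.2 fun w hw hwS ↦ ?_
  obtain ⟨huS, huw⟩ := (mem_and_adj_iff_of_mem_privateNeighborFinset hw u).2 rfl
  exact hS huS hwS huw.ne huw

theorem card_privateNeighborFinset_add_card_le (h3 : G.CliqueFree 3)
    (hS : G.IsIndepSet (S : Set V)) (hu : u ∈ S) :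
    #(privateNeighborFinset G S u) + #S ≤ G.indepNum + 1 := by
  have hcard := (isIndepSet_privateNeighborFinset_union_erase (u := u) h3 hS).card_le_indepNum
  rw [card_union_of_disjoint ((disjoint_privateNeighborFinset hS).mono_right (erase_subset u S))]
    at hcard
  have := card_erase_add_one hu
  omega

theorem filter_card_adj_eq_one_eq_biUnion (S : Finset V) :
    ({w | #{x ∈ S | G.Adj x w} = 1} : Finset V) = S.biUnion (privateNeighborFinset G S) := by
  ext w
  simp only [mem_filter_univ, mem_biUnion, mem_privateNeighborFinset, card_eq_one]
  refine ⟨fun ⟨u, hu⟩ ↦ ⟨u, ?_, hu⟩, fun ⟨u, _, hu⟩ ↦ ⟨u, hu⟩⟩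
  exact mem_of_mem_filter u (hu ▸ mem_singleton_self u)

end PrivateNeighbors

theorem card_filter_card_adj_eq_one_add_sq_le (h3 : G.CliqueFree 3) {S : Finset V}
    (hS : G.IsIndepSet (S : Set V)) :
    #{w | #{x ∈ S | G.Adj x w} = 1} + #S ^ 2 ≤ #S * (G.indepNum + 1) := by
  classical
  calc #{w | #{x ∈ S | G.Adj x w} = 1} + #S ^ 2
      ≤ ∑ u ∈ S, #(privateNeighborFinset G S u) + #S * #S := by
        rw [filter_card_adj_eq_one_eq_biUnion, sq]
        gcongr
        exact card_biUnion_le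
    _ = ∑ u ∈ S, (#(privateNeighborFinset G S u) + #S) := by
        rw [sum_add_distrib, sum_const, smul_eq_mul]
    _ ≤ #S * (G.indepNum + 1) :=
        sum_le_card_nsmul _ _ _ fun u hu ↦ card_privateNeighborFinset_add_card_le h3 hS hu

section NonNeighbors

variable [DecidableEq V]

theorem two_mul_degree_compl_le (hdiam : G.ediam ≤ 2) (v : V) :
    2 * Gᶜ.degree v ≤ ∑ w ∈ Gᶜ.neighborFinset v, #{x ∈ G.neighborFinset v | G.Adj x w} +
      #{w | #{x ∈ G.neighborFinset v | G.Adj x w} = 1} := by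
  have one_le_card : ∀ w ∈ Gᶜ.neighborFinset v, 1 ≤ #{x ∈ G.neighborFinset v | G.Adj x w} := by
    intro w hw
    obtain ⟨hne, hadj⟩ := (SimpleGraph.mem_neighborFinset _ _ _).1 hw
    obtain ⟨u, hvu, hwu⟩ := exists_adj_adj_of_ediam_le_two hdiam hne hadj
    exact card_pos.2 ⟨u, mem_filter.2 ⟨(G.mem_neighborFinset v u).2 hvu, hwu.symm⟩⟩
  refine (two_mul_card_le_sum_add_card_filter_eq_one one_le_card).trans ?_
  gcongr
  exact subset_univ _

theorem sum_compl_neighborFinset_card_adj_add_degree_le (h3 : G.CliqueFree 3) (v : V) :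
    ∑ w ∈ Gᶜ.neighborFinset v, #{x ∈ G.neighborFinset v | G.Adj x w} + G.degree v ≤
      G.degree v * G.indepNum := by
  have card_adj_self : #{x ∈ G.neighborFinset v | G.Adj x v} = G.degree v := by
    rw [filter_true_of_mem fun x hx ↦ ((G.mem_neighborFinset v x).1 hx).symm,
      SimpleGraph.card_neighborFinset_eq_degree]
  calc ∑ w ∈ Gᶜ.neighborFinset v, #{x ∈ G.neighborFinset v | G.Adj x w} + G.degree v
      = ∑ w ∈ insert v (Gᶜ.neighborFinset v), #{x ∈ G.neighborFinset v | G.Adj x w} := by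
        rw [sum_insert (Gᶜ.notMem_neighborFinset_self v), card_adj_self, add_comm]
    _ ≤ ∑ w, #{x ∈ G.neighborFinset v | G.Adj x w} := sum_le_sum_of_subset (subset_univ _)
    _ = ∑ x ∈ G.neighborFinset v, G.degree x := sum_card_filter_adj _
    _ ≤ G.degree v * G.indepNum := sum_le_card_nsmul _ _ _ fun x _ ↦ degree_le_indepNum h3 x

end NonNeighbors

theorem stmt_16_general {r : ℕ} (h3 : G.CliqueFree 3) (hr : Gᶜ.CliqueFree r) (hdiam : G.ediam ≤ 2)
    (v : V) : 2 * Fintype.card V + G.degree v ^ 2 ≤ 2 * r * G.degree v + 2 := by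
  classical
  have hlower := two_mul_degree_compl_le hdiam v
  have hedges := sum_compl_neighborFinset_card_adj_add_degree_le h3 v
  have hprivate := card_filter_card_adj_eq_one_add_sq_le h3 (isIndepSet_neighborFinset h3 v)
  rw [SimpleGraph.card_neighborFinset_eq_degree] at hprivate
  have hcompl : Gᶜ.degree v = Fintype.card V - 1 - G.degree v := G.degree_compl v
  have hcard : Fintype.card V ≤ Gᶜ.degree v + G.degree v + 1 := by omega
  calc 2 * Fintype.card V + G.degree v ^ 2
      ≤ 2 * (G.indepNum + 1) * G.degree v + 2 := by linarith
    _ ≤ 2 * r * G.degree v + 2 := by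
        gcongr
        exact indepNum_lt_of_compl_cliqueFree hr

/-- Every vertex of a (3,10,40)-graph of diameter 2 has degree at least 6. -/
theorem stmt_16 (Ω : SimpleGraph (Fin 40)) [DecidableRel Ω.Adj]
    (h3 : Ω.CliqueFree 3) (h10 : Ωᶜ.CliqueFree 10)
    (hdiam : Ω.diam = 2) :
    ∀ v : Fin 40, 6 ≤ Ω.degree v := by
  intro v
  have hquad := stmt_16_general h3 h10 ((ENat.toNat_eq_iff two_ne_zero).1 hdiam).le v
  rw [Fintype.card_fin] at hquad
  by_contra! hlt
  nlinarith
end
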